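/- arXiv:0809.0603 — 3 statements merged into one kernel-verified Lean document; each statement's English description precedes it below -/
import Mathlib

section
/- Let b be a bispecial factor of a Sturmian word u containing both letters, with return words r₀(b), r₁(b). Then at least one return word r of b satisfies |b|/2 < |r| ≤ |b|, this r is a prefix of b, and rr is a factor of u. Consequently, r is a primitive factor of u with index at least 2 and length greater than |b|/2. -/
open Filter Topology

namespace SturmianPaper

variable {A : Type*} [DecidableEq A]

/-- The factor `w` occurs in the infinite word `u` at position `i`. -/
def FactorAt (u : ℕ → A) (w : List A) (i : ℕ) : Prop :=
  w = (List.range w.length).map fun j => u (i + j)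

/-- `w` is a factor of the infinite word `u`. -/
def IsFactor (u : ℕ → A) (w : List A) : Prop := ∃ i, FactorAt u w i

/-- The factor complexity of `u`: the number of factors of length `n`. -/
noncomputable def complexity (u : ℕ → A) (n : ℕ) : ℕ :=
  Set.ncard {w : List A | IsFactor u w ∧ w.length = n}

/-- A Sturmian word: complexity `n + 1` for every `n` (this forces aperiodicity). -/
def IsSturmian (u : ℕ → A) : Prop := ∀ n, complexity u n = n + 1

/-- `u` is eventually periodic. -/
def EventuallyPeriodic (u : ℕ → A) : Prop :=
  ∃ p > 0, ∃ N, ∀ n ≥ N, u (n + p) = u n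

/-- `u` is uniformly recurrent: every factor occurs with bounded gaps. -/
def UniformlyRecurrent (u : ℕ → A) : Prop :=
  ∀ w, IsFactor u w → ∃ B, ∀ k, ∃ i, k ≤ i ∧ i < k + B ∧ FactorAt u w i

/-- The number of occurrences of `w` in the finite word `x`. -/
def occCount (x w : List A) : ℕ :=
  ((List.range (x.length + 1)).filter fun i => decide (w <+: x.drop i)).length

/-- `v` is a return word of the factor `w` of `u`. -/
def IsReturnWord (u : ℕ → A) (w v : List A) : Prop :=
  v ≠ [] ∧ IsFactor u (v ++ w) ∧ w <+: v ++ w ∧ occCount (v ++ w) w = 2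

/-- Recurrence function: `R n + 1` is the maximal length of a complete return word
`v ++ w` over factors `w` of length `n` and return words `v` of `w`. -/
noncomputable def recFun (u : ℕ → A) (n : ℕ) : ℕ :=
  sSup {m | ∃ w v, IsFactor u w ∧ w.length = n ∧ IsReturnWord u w v ∧
    m + 1 = v.length + w.length}

/-- `v = w ^ (|v| / |w|)`: `v` is a fractional power of `w`,
i.e. a prefix of `w w w ⋯` of length at least `|w|`. -/
def FracPow (w v : List A) : Prop :=
  w ≠ [] ∧ w.length ≤ v.length ∧ ∀ i < v.length, v[i]? = w[i % w.length]?

/-- The set of rational exponents `r` (viewed inside `ℝ`) such that `w ^ r ∈ L(u)`. -/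
def expSet (u : ℕ → A) (w : List A) : Set ℝ :=
  {r | ∃ v, IsFactor u v ∧ FracPow w v ∧ r = (v.length : ℝ) / (w.length : ℝ)}

/-- The index of the factor `w` in `u`: `sup {r ∈ ℚ | w ^ r ∈ L(u)}`. -/
noncomputable def index (u : ℕ → A) (w : List A) : ℝ := sSup (expSet u w)

/-- A finite word is primitive if it is not a proper integer power. -/
def Primitive (w : List A) : Prop :=
  w ≠ [] ∧ ∀ (z : List A) (k : ℕ), 2 ≤ k → w ≠ (List.replicate k z).flatten

/-- `w` is left special in `u` (alphabet `Bool`, `true = A`, `false = B`). -/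
def LeftSpecial (u : ℕ → Bool) (w : List Bool) : Prop :=
  IsFactor u (true :: w) ∧ IsFactor u (false :: w)

/-- `w` is right special in `u`. -/
def RightSpecial (u : ℕ → Bool) (w : List Bool) : Prop :=
  IsFactor u (w ++ [true]) ∧ IsFactor u (w ++ [false])

/-- The Sturmian word of slope `α` and intercept `x₀`, coding the orbit of `x₀`
under the exchange of the two intervals `I_A = [0, α)` (coded `true`) and
`I_B = [α, 1)` (coded `false`); the exchange is the rotation `x ↦ x + (1 - α) mod 1`. -/
noncomputable def sturmianWord (α x₀ : ℝ) : ℕ → Bool :=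
  fun n => decide (Int.fract (x₀ + n * (1 - α)) < α)

/-- The Sturmian morphism `A ↦ AᶜB`, `B ↦ A` applied to a finite word. -/
def phiW (c : ℕ) (w : List Bool) : List Bool :=
  (w.map fun b => if b then List.replicate c true ++ [false] else [true]).flatten

/-- The Sturmian morphism `A ↦ AᶜB`, `B ↦ A` applied to an infinite word. -/
noncomputable def phiInf (c : ℕ) (u : ℕ → Bool) : ℕ → Bool :=
  fun n => (phiW c ((List.range (n + 1)).map u)).getD n false


/-! Write `n = |b|`. A Sturmian word is aperiodic and has a unique right special factor of each
length, so between two consecutive occurrences of `b` the factors of length `n` follow one another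
deterministically. Hence those met before the return are pairwise distinct, and the next
occurrence of `b` is dictated by the letter following the current one. Counting the `n + 1` factors
of length `n` gives `|r₀| + |r₁| ≥ n + 2`, so one of the two return words is longer than `n / 2`.
A return word of length `n + 1` would visit every factor of length `n`, and then only its last stop
could precede `b`; but `b` is left special and, containing both letters, is never followed by `b`
one position later. So both return words have length at most `n`. Finally the index of `r` is
finite because `u` is uniformly recurrent and some factor of length `|r| + 1` breaks the period
`|r|`. -/

section Window

variable {α : Type*} {u : ℕ → α} {v w : List α} {a : α} {m n i j k : ℕ}

/-- The factor of length `n` of the infinite word `u` at position `i`; it turns an occurrence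
`FactorAt u w i` into the equation `window u w.length i = w`. -/
def window (u : ℕ → α) (n i : ℕ) : List α := (List.range n).map fun k => u (i + k)

@[simp]
theorem length_window : (window u n i).length = n := by simp [window]

theorem window_eq_window_iff :
    window u n i = window u n j ↔ ∀ k < n, u (i + k) = u (j + k) := by
  simp [window]

theorem window_add : window u (m + n) i = window u m i ++ window u n (i + m) := by
  simp [window, List.range_add, add_assoc]

theorem drop_window : (window u m i).drop k = window u (m - k) (i + k) := by
  refine List.ext_getElem (by simp) fun l _ _ => ?_
  simp [window, add_assoc]

theorem window_shift (N : ℕ) : window (fun k => u (N + k)) n i = window u n (N + i) := by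
  simp [window, add_assoc]

theorem window_succ_eq (h : window u n i = window u n j) (hn : u (i + n) = u (j + n)) :
    window u n (i + 1) = window u n (j + 1) := by
  rw [window_eq_window_iff] at h ⊢
  intro k hk
  rw [add_assoc, add_assoc, add_comm 1 k]
  rcases Nat.lt_or_eq_of_le hk with hlt | rfl
  · exact h _ hlt
  · exact hn

theorem factorAt_iff : FactorAt u w i ↔ window u w.length i = w := eq_comm

theorem factorAt_window : FactorAt u (window u n i) i := by
  rw [factorAt_iff, length_window]

theorem FactorAt.window_eq (hi : FactorAt u w i) (hj : FactorAt u w j) :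
    window u w.length i = window u w.length j :=
  (factorAt_iff.1 hi).trans (factorAt_iff.1 hj).symm

theorem FactorAt.congr (h : FactorAt u w i) (hij : window u w.length i = window u w.length j) :
    FactorAt u w j :=
  factorAt_iff.2 (hij.symm.trans (factorAt_iff.1 h))

theorem factorAt_append :
    FactorAt u (v ++ w) i ↔ FactorAt u v i ∧ FactorAt u w (i + v.length) := by
  simp only [factorAt_iff, List.length_append, window_add]
  exact List.append_eq_append_iff_of_size_eq_left length_window

theorem factorAt_singleton : FactorAt u [a] i ↔ u i = a := by
  simp [factorAt_iff, window]

theorem factorAt_cons : FactorAt u (a :: w) i ↔ u i = a ∧ FactorAt u w (i + 1) := by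
  rw [← List.singleton_append, factorAt_append, factorAt_singleton, List.length_singleton]

theorem factorAt_concat : FactorAt u (w ++ [a]) i ↔ FactorAt u w i ∧ u (i + w.length) = a := by
  rw [factorAt_append, factorAt_singleton]

theorem FactorAt.exists_of_infix (hw : FactorAt u w i) (hvw : v <:+: w) :
    ∃ k ≤ w.length, FactorAt u v (i + k) := by
  obtain ⟨s, t, rfl⟩ := hvw
  rw [factorAt_append, factorAt_append] at hw
  exact ⟨s.length, by simp, hw.1.2⟩

theorem IsFactor.of_prefix (hw : IsFactor u w) (hvw : v <+: w) : IsFactor u v := by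
  obtain ⟨i, hi⟩ := hw
  obtain ⟨k, -, hk⟩ := hi.exists_of_infix hvw.isInfix
  exact ⟨i + k, hk⟩

theorem prefix_window_iff : w <+: window u m i ↔ w.length ≤ m ∧ FactorAt u w i := by
  rw [factorAt_iff]
  constructor
  · intro h
    have hle : w.length ≤ m := by simpa using h.length_le
    obtain ⟨l, rfl⟩ := Nat.exists_eq_add_of_le hle
    rw [window_add] at h
    have hprefix := List.prefix_of_prefix_length_le h (List.prefix_append _ _) (by simp)
    exact ⟨hle, (hprefix.eq_of_length length_window.symm).symm⟩
  · rintro ⟨hle, h⟩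
    obtain ⟨l, rfl⟩ := Nat.exists_eq_add_of_le hle
    rw [window_add, h]
    exact List.prefix_append _ _

theorem FactorAt.infix (hw : FactorAt u w i) (hv : FactorAt u v (i + k))
    (hk : k + v.length ≤ w.length) : v <:+: w := by
  have hprefix : v <+: w.drop k := by
    rw [← factorAt_iff.1 hw, drop_window, prefix_window_iff]
    exact ⟨by lia, hv⟩
  exact hprefix.isInfix.trans (List.drop_suffix k w).isInfix

theorem FactorAt.eq_of_mem_of_succ (hi : FactorAt u w i) (hs : FactorAt u w (i + 1))
    (ha : a ∈ w) : a = u i := by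
  have hconst : ∀ k ≤ w.length, u (i + k) = u i := by
    intro k
    induction k with
    | zero => simp
    | succ k ih =>
      intro hk
      rw [← ih (Nat.le_of_succ_le hk), window_eq_window_iff.1 (hi.window_eq hs) k hk,
        add_assoc, add_comm 1 k]
  rw [← factorAt_iff.1 hi, window, List.mem_map] at ha
  obtain ⟨k, hk, rfl⟩ := ha
  exact hconst k (List.mem_range.1 hk).le

end Window

section Complexity

variable {α : Type*} {u : ℕ → α} {n : ℕ}

theorem range_window : Set.range (window u n) = {w | IsFactor u w ∧ w.length = n} := by
  ext w
  constructor
  · rintro ⟨i, rfl⟩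
    exact ⟨⟨i, factorAt_window⟩, length_window⟩
  · rintro ⟨⟨i, hi⟩, rfl⟩
    exact ⟨i, factorAt_iff.1 hi⟩

theorem complexity_eq_ncard_range_window : complexity u n = (Set.range (window u n)).ncard := by
  rw [range_window, complexity]

theorem finite_range_window [Finite α] : (Set.range (window u n)).Finite :=
  (List.finite_length_eq α n).subset <| Set.range_subset_iff.2 fun _ => length_window

theorem EventuallyPeriodic.exists_complexity_le (h : EventuallyPeriodic u) :
    ∃ C, ∀ n, complexity u n ≤ C := by
  obtain ⟨p, hp, N, hper⟩ := h
  have reduce : ∀ i, ∃ j < N + p, ∀ k, u (j + k) = u (i + k) := by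
    intro i
    induction i using Nat.strong_induction_on with
    | _ i ih =>
      rcases lt_or_ge i (N + p) with hi | hi
      · exact ⟨i, hi, fun _ => rfl⟩
      · obtain ⟨j, hj, hji⟩ := ih (i - p) (by lia)
        refine ⟨j, hj, fun k => ?_⟩
        rw [hji, ← hper _ (by lia)]
        congr 1
        lia
  refine ⟨N + p, fun n => ?_⟩
  have hsub : Set.range (window u n) ⊆ window u n '' Set.Iio (N + p) := by
    rintro _ ⟨i, rfl⟩
    obtain ⟨j, hj, hji⟩ := reduce i
    exact ⟨j, hj, window_eq_window_iff.2 fun k _ => hji k⟩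
  calc complexity u n = (Set.range (window u n)).ncard := complexity_eq_ncard_range_window
    _ ≤ (window u n '' Set.Iio (N + p)).ncard :=
      Set.ncard_le_ncard hsub ((Set.finite_Iio _).image _)
    _ ≤ (Set.Iio (N + p)).ncard := Set.ncard_image_le (Set.finite_Iio _)
    _ = N + p := Set.ncard_Iio_nat _

theorem eventuallyPeriodic_of_window_determines_next [Finite α]
    (hdet : ∀ i j, window u n i = window u n j → u (i + n) = u (j + n)) :
    EventuallyPeriodic u := by
  obtain ⟨i, j, hij, heq⟩ := finite_range_window.exists_lt_map_eq_of_forall_mem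
    (f := window u n) Set.mem_range_self
  have hshift : ∀ k, window u n (i + k) = window u n (j + k) := by
    intro k
    induction k with
    | zero => exact heq
    | succ k ih => exact window_succ_eq ih (hdet _ _ ih)
  refine ⟨j - i, Nat.sub_pos_of_lt hij, i + n, fun l hl => ?_⟩
  obtain ⟨k, rfl⟩ := Nat.exists_eq_add_of_le hl
  convert (hdet _ _ (hshift k)).symm using 2 <;> lia

theorem EventuallyPeriodic.of_shift {N : ℕ} (h : EventuallyPeriodic fun k => u (N + k)) :
    EventuallyPeriodic u := by
  obtain ⟨p, hp, M, hper⟩ := h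
  refine ⟨p, hp, N + M, fun l hl => ?_⟩
  obtain ⟨k, rfl⟩ := Nat.exists_eq_add_of_le hl
  simpa only [add_assoc] using hper (M + k) (Nat.le_add_right M k)

end Complexity

section MorseHedlund

variable {u : ℕ → Bool} {w : List Bool} {n i j : ℕ}

theorem next_eq_of_not_rightSpecial (h : window u n i = window u n j)
    (hns : ¬RightSpecial u (window u n i)) : u (i + n) = u (j + n) := by
  by_contra hne
  have hi : IsFactor u (window u n i ++ [u (i + n)]) :=
    ⟨i, factorAt_concat.2 ⟨factorAt_window, by rw [length_window]⟩⟩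
  have hj : IsFactor u (window u n i ++ [u (j + n)]) :=
    ⟨j, factorAt_concat.2 ⟨h ▸ factorAt_window, by rw [length_window]⟩⟩
  apply hns
  cases hui : u (i + n) <;> cases huj : u (j + n) <;> rw [hui] at hi hne <;> rw [huj] at hj hne
  · exact absurd rfl hne
  · exact ⟨hj, hi⟩
  · exact ⟨hi, hj⟩
  · exact absurd rfl hne

theorem complexity_succ (u : ℕ → Bool) (n : ℕ) :
    complexity u (n + 1) = complexity u n + {w | RightSpecial u w ∧ w.length = n}.ncard := by
  let E : Bool → Set (List Bool) := fun c => {w | IsFactor u (w ++ [c]) ∧ w.length = n}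
  have hfin : ∀ c, (E c).Finite := fun c =>
    (List.finite_length_eq Bool n).subset fun _ hw => hw.2
  have hinj : ∀ c : Bool, Function.Injective fun w : List Bool => w ++ [c] :=
    fun c => List.append_left_injective [c]
  have hlong : {w | IsFactor u w ∧ w.length = n + 1} =
      (· ++ [true]) '' E true ∪ (· ++ [false]) '' E false := by
    ext w
    constructor
    · rintro ⟨hw, hlen⟩
      rcases List.eq_nil_or_concat' w with rfl | ⟨v, c, rfl⟩
      · simp at hlen
      · have hv : v.length = n := by simpa using hlen
        cases c
        · exact Or.inr ⟨v, ⟨hw, hv⟩, rfl⟩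
        · exact Or.inl ⟨v, ⟨hw, hv⟩, rfl⟩
    · rintro (⟨v, hv, rfl⟩ | ⟨v, hv, rfl⟩) <;> exact ⟨hv.1, by simp [hv.2]⟩
  have hshort : {w | IsFactor u w ∧ w.length = n} = E true ∪ E false := by
    ext w
    constructor
    · rintro ⟨⟨i, hi⟩, hlen⟩
      cases hc : u (i + w.length)
      · exact Or.inr ⟨⟨i, factorAt_concat.2 ⟨hi, hc⟩⟩, hlen⟩
      · exact Or.inl ⟨⟨i, factorAt_concat.2 ⟨hi, hc⟩⟩, hlen⟩
    · rintro (hw | hw) <;> exact ⟨hw.1.of_prefix (List.prefix_append _ _), hw.2⟩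
  have hspecial : {w | RightSpecial u w ∧ w.length = n} = E true ∩ E false :=
    Set.ext fun _ => and_and_right
  have hdisj : Disjoint ((· ++ [true]) '' E true) ((· ++ [false]) '' E false) := by
    rw [Set.disjoint_left]
    rintro _ ⟨v, -, rfl⟩ ⟨v', -, h⟩
    simp at h
  rw [complexity, complexity, hlong, hshort, hspecial,
    Set.ncard_union_add_ncard_inter _ _ (hfin _) (hfin _),
    Set.ncard_union_eq hdisj ((hfin _).image _) ((hfin _).image _),
    Set.ncard_image_of_injective _ (hinj _), Set.ncard_image_of_injective _ (hinj _)]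

theorem exists_rightSpecial_of_not_eventuallyPeriodic (h : ¬EventuallyPeriodic u) (n : ℕ) :
    ∃ w, RightSpecial u w ∧ w.length = n := by
  by_contra! hns
  exact h <| eventuallyPeriodic_of_window_determines_next fun i j hij =>
    next_eq_of_not_rightSpecial hij fun hs => hns _ hs length_window

theorem lt_complexity_of_not_eventuallyPeriodic (h : ¬EventuallyPeriodic u) (n : ℕ) :
    n < complexity u n := by
  induction n with
  | zero =>
    rw [complexity_eq_ncard_range_window, Set.ncard_pos finite_range_window]
    exact Set.range_nonempty _
  | succ n ih =>
    have hpos : 0 < {w | RightSpecial u w ∧ w.length = n}.ncard :=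
      (Set.ncard_pos ((List.finite_length_eq Bool n).subset fun _ hw => hw.2)).2
        (exists_rightSpecial_of_not_eventuallyPeriodic h n)
    have := complexity_succ u n
    lia

end MorseHedlund

section Recurrence

variable {α : Type*} {u : ℕ → α} {w : List α} {i j k : ℕ}

/-- Every factor of `u` occurs infinitely often, that is, beyond every position. -/
def Recurrent (u : ℕ → α) : Prop := ∀ w, IsFactor u w → ∀ N, ∃ i ≥ N, FactorAt u w i

/-- The positions `i < j` are consecutive occurrences of `w` in `u`: the factor between them, of
length `j - i`, is a return word of `w`. -/
structure ConsecutiveOccurrences (u : ℕ → α) (w : List α) (i j : ℕ) : Prop where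
  lt : i < j
  left : FactorAt u w i
  right : FactorAt u w j
  not_between : ∀ k, i < k → k < j → ¬FactorAt u w k

theorem Recurrent.exists_consecutiveOccurrences_around (hu : Recurrent u) (hi : FactorAt u w i)
    (hik : i ≤ k) : ∃ p q, ConsecutiveOccurrences u w p q ∧ p ≤ k ∧ k < q := by
  classical
  have hnext : ∃ q, k < q ∧ FactorAt u w q := hu w ⟨i, hi⟩ (k + 1)
  refine ⟨Nat.findGreatest (FactorAt u w) k, Nat.find hnext,
    ⟨(Nat.findGreatest_le k).trans_lt (Nat.find_spec hnext).1, Nat.findGreatest_spec hik hi,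
      (Nat.find_spec hnext).2, fun l hpl hlq hl => ?_⟩,
    Nat.findGreatest_le k, (Nat.find_spec hnext).1⟩
  rcases le_or_gt l k with hlk | hkl
  · exact Nat.findGreatest_is_greatest hpl hlk hl
  · exact Nat.find_min hnext hlq ⟨hkl, hl⟩

theorem Recurrent.exists_consecutiveOccurrences (hu : Recurrent u) (hi : FactorAt u w i) :
    ∃ j, ConsecutiveOccurrences u w i j := by
  obtain ⟨p, q, hpq, hpi, hiq⟩ := hu.exists_consecutiveOccurrences_around hi le_rfl
  obtain rfl | hlt := hpi.eq_or_lt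
  · exact ⟨q, hpq⟩
  · exact absurd hi (hpq.not_between i hlt hiq)

theorem occCount_eq_card [DecidableEq α] (x w : List α) :
    occCount x w = Finset.card {k ∈ Finset.range (x.length + 1) | w <+: x.drop k} :=
  rfl

theorem ConsecutiveOccurrences.isReturnWord [DecidableEq α]
    (h : ConsecutiveOccurrences u w i j) : IsReturnWord u w (window u (j - i) i) := by
  have hij : i + (j - i) = j := Nat.add_sub_of_le h.lt.le
  have hcomplete : window u (j - i) i ++ w = window u (j - i + w.length) i := by
    rw [window_add, hij, factorAt_iff.1 h.right]
  refine ⟨fun hnil => ?_, ⟨i, hcomplete ▸ factorAt_window⟩, ?_, ?_⟩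
  · have hzero : j - i = 0 := by simpa using congrArg List.length hnil
    exact (Nat.sub_pos_of_lt h.lt).ne' hzero
  · rw [hcomplete, prefix_window_iff]
    exact ⟨Nat.le_add_left _ _, h.left⟩
  · have hocc : {k ∈ Finset.range (j - i + w.length + 1) |
        w <+: (window u (j - i + w.length) i).drop k} = {0, j - i} := by
      ext k
      simp only [Finset.mem_filter, Finset.mem_range, Finset.mem_insert, Finset.mem_singleton,
        drop_window, prefix_window_iff]
      constructor
      · rintro ⟨hk, hle, hocc⟩
        by_contra! hne
        exact h.not_between (i + k) (by lia) (by lia) hocc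
      · rintro (rfl | rfl)
        · exact ⟨by lia, by lia, h.left⟩
        · exact ⟨by lia, by lia, hij.symm ▸ h.right⟩
    rw [hcomplete, occCount_eq_card, length_window, hocc,
      Finset.card_pair (Nat.sub_pos_of_lt h.lt).ne]

end Recurrence

section Index

variable {α : Type*} {u : ℕ → α}

theorem FracPow.apply_add_length_eq {r v : List α} {i k : ℕ} (hpow : FracPow r v)
    (hv : FactorAt u v i) (hk : k + r.length < v.length) : u (i + k + r.length) = u (i + k) := by
  have hletter : ∀ l < v.length, some (u (i + l)) = r[l % r.length]? := fun l hl => by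
    rw [← hpow.2.2 l hl]
    conv_rhs => rw [← factorAt_iff.1 hv]
    simp [window, hl]
  apply Option.some_injective
  rw [add_assoc, hletter _ hk, hletter _ (by lia), Nat.add_mod_right]

theorem bddAbove_expSet (hu : UniformlyRecurrent u) (hper : ¬EventuallyPeriodic u)
    (r : List α) : BddAbove (expSet u r) := by
  rcases eq_or_ne r [] with rfl | hr
  · exact ⟨0, fun _ ⟨_, _, hpow, _⟩ => absurd rfl hpow.1⟩
  have hpos : 0 < r.length := List.length_pos_iff.2 hr
  obtain ⟨j, hbreak⟩ : ∃ j, u (j + r.length) ≠ u j := by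
    by_contra! hall
    exact hper ⟨r.length, hpos, 0, fun j _ => hall j⟩
  obtain ⟨B, hB⟩ := hu (window u (r.length + 1) j) ⟨j, factorAt_window⟩
  refine ⟨(B + r.length : ℕ), ?_⟩
  rintro _ ⟨v, ⟨i, hv⟩, hpow, rfl⟩
  have hlen : v.length ≤ B + r.length := by
    by_contra! hlong
    obtain ⟨q, hiq, hqB, hq⟩ := hB i
    obtain ⟨k, rfl⟩ := Nat.exists_eq_add_of_le hiq
    have hcopy : ∀ l ≤ r.length, u (i + k + l) = u (j + l) := by
      simpa [factorAt_iff, window_eq_window_iff, Nat.lt_succ_iff] using hq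
    exact hbreak <| calc
      u (j + r.length) = u (i + k + r.length) := (hcopy _ le_rfl).symm
      _ = u (i + k + 0) := hpow.apply_add_length_eq hv (by lia)
      _ = u j := hcopy 0 (Nat.zero_le _)
  calc (v.length : ℝ) / r.length ≤ v.length :=
        div_le_self (Nat.cast_nonneg _) (Nat.one_le_cast.2 hpos)
    _ ≤ (B + r.length : ℕ) := Nat.cast_le.2 hlen

theorem fracPow_append_self {r : List α} (hr : r ≠ []) : FracPow r (r ++ r) := by
  refine ⟨hr, by simp, fun i hi => ?_⟩
  rcases lt_or_ge i r.length with hlt | hge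
  · rw [List.getElem?_append_left hlt, Nat.mod_eq_of_lt hlt]
  · rw [List.length_append] at hi
    rw [List.getElem?_append_right hge, Nat.mod_eq_sub_mod hge, Nat.mod_eq_of_lt (by lia)]

theorem two_le_index {r : List α} (hbdd : BddAbove (expSet u r)) (hr : r ≠ [])
    (hrr : IsFactor u (r ++ r)) : 2 ≤ index u r := by
  refine le_csSup hbdd ⟨r ++ r, hrr, fracPow_append_self hr, ?_⟩
  have : (r.length : ℝ) ≠ 0 := Nat.cast_ne_zero.2 (List.length_pos_iff.2 hr).ne'
  rw [List.length_append, Nat.cast_add]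
  field_simp
  norm_num

end Index

section ReturnWord

variable {α : Type*} {u : ℕ → α} {v w x y z : List α}

theorem prefix_append_of_commute (hxz : x ++ z = z ++ x) (hx : x ≠ [])
    (hw : w <+: x ++ w) : w <+: z ++ w := by
  induction hn : w.length using Nat.strong_induction_on generalizing w with
  | _ n ih =>
    rcases le_total w.length x.length with hle | hle
    · have hwx : w <+: x := List.prefix_of_prefix_length_le hw (List.prefix_append x w) hle
      have hwzx : w <+: z ++ x := hxz ▸ hwx.trans (List.prefix_append x z)
      exact List.prefix_of_prefix_length_le hwzx ((List.prefix_append_right_inj z).2 hwx)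
        (by simp)
    · obtain ⟨w', rfl⟩ := List.prefix_of_prefix_length_le (List.prefix_append x w) hw hle
      have hw' : w' <+: x ++ w' := (List.prefix_append_right_inj x).1 hw
      have hlt : w'.length < n := by
        rw [← hn, List.length_append]
        exact Nat.lt_add_of_pos_left (List.length_pos_iff.2 hx)
      rw [← List.append_assoc, ← hxz, List.append_assoc]
      exact (List.prefix_append_right_inj x).2 (ih _ hlt hw' rfl)

variable [DecidableEq α]

theorem IsReturnWord.prefix_of_length_le (h : IsReturnWord u w v) (hle : v.length ≤ w.length) :
    v <+: w :=
  List.prefix_of_prefix_length_le (List.prefix_append v w) h.2.2.1 hle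

theorem IsReturnWord.isFactor_append_self (h : IsReturnWord u w v)
    (hle : v.length ≤ w.length) : IsFactor u (v ++ v) :=
  h.2.1.of_prefix <| (List.prefix_append_right_inj v).2 (h.prefix_of_length_le hle)

theorem three_le_occCount (hx : x ≠ []) (hy : y ≠ [])
    (h₀ : w <+: x ++ y ++ w) (h₁ : w <+: y ++ w) : 3 ≤ occCount (x ++ y ++ w) w := by
  have hxpos : 0 < x.length := List.length_pos_iff.2 hx
  have hypos : 0 < y.length := List.length_pos_iff.2 hy
  have hsub : {0, x.length, x.length + y.length} ⊆
      {k ∈ Finset.range ((x ++ y ++ w).length + 1) | w <+: (x ++ y ++ w).drop k} := by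
    intro k hk
    simp only [Finset.mem_insert, Finset.mem_singleton] at hk
    rw [Finset.mem_filter, Finset.mem_range]
    rcases hk with rfl | rfl | rfl
    · exact ⟨Nat.succ_pos _, h₀⟩
    · exact ⟨by simp only [List.length_append]; lia, by simpa using h₁⟩
    · exact ⟨by simp only [List.length_append]; lia, by simp [← List.drop_drop]⟩
  calc 3 = Finset.card {0, x.length, x.length + y.length} := by
        rw [Finset.card_eq_three.2 ⟨0, _, _, hxpos.ne, by lia, by lia, rfl⟩]
    _ ≤ occCount (x ++ y ++ w) w := occCount_eq_card (x ++ y ++ w) w ▸ Finset.card_le_card hsub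

theorem IsReturnWord.primitive (h : IsReturnWord u w v) : Primitive v := by
  obtain ⟨hne, -, hprefix, hcount⟩ := h
  refine ⟨hne, fun z k hk hv => ?_⟩
  obtain ⟨k, rfl⟩ := Nat.exists_eq_add_of_le' hk
  set y := (List.replicate (k + 1) z).flatten with hy
  have hvzy : v = z ++ y := by rw [hv, hy, ← List.flatten_cons, ← List.replicate_succ]
  have hvyz : v = y ++ z := by
    rw [hv, hy, List.replicate_succ' (n := k + 1), List.flatten_concat]
  have hz : z ≠ [] := by
    rintro rfl
    simp [hv] at hne
  have hy' : y ≠ [] := by simp [hy, List.replicate_succ, hz]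
  have hcomm : v ++ y = y ++ v := calc
    v ++ y = y ++ z ++ y := by rw [← hvyz]
    _ = y ++ v := by rw [List.append_assoc, ← hvzy]
  have hwy : w <+: y ++ w := prefix_append_of_commute hcomm hne hprefix
  have := three_le_occCount hz hy' (hvzy ▸ hprefix) hwy
  rw [← hvzy, hcount] at this
  lia

end ReturnWord

section Sturmian

variable {u : ℕ → Bool} {v w : List Bool} {n i j i' j' p x y : ℕ}

theorem IsSturmian.not_eventuallyPeriodic (hu : IsSturmian u) : ¬EventuallyPeriodic u := by
  intro hper
  obtain ⟨C, hC⟩ := hper.exists_complexity_le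
  have := hC C
  rw [hu C] at this
  lia

theorem IsSturmian.ncard_range_window (hu : IsSturmian u) :
    (Set.range (window u n)).ncard = n + 1 := by
  rw [← complexity_eq_ncard_range_window, hu n]

theorem IsSturmian.rightSpecial_unique (hu : IsSturmian u) (hv : RightSpecial u v)
    (hw : RightSpecial u w) (hlen : v.length = w.length) : v = w := by
  have hcard : {x | RightSpecial u x ∧ x.length = w.length}.ncard = 1 := by
    have := complexity_succ u w.length
    rw [hu, hu] at this
    lia
  obtain ⟨x, hx⟩ := Set.ncard_eq_one.1 hcard
  have hvx : v ∈ ({x} : Set (List Bool)) := hx ▸ ⟨hv, hlen⟩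
  have hwx : w ∈ ({x} : Set (List Bool)) := hx ▸ ⟨hw, rfl⟩
  exact hvx.trans hwx.symm

/- The tail of `u` from position `N` on is aperiodic, so by Morse–Hedlund it already has as many
factors of each length as `u`. -/
theorem IsSturmian.recurrent (hu : IsSturmian u) : Recurrent u := by
  rintro w ⟨i, hi⟩ N
  have htail : ¬EventuallyPeriodic fun k => u (N + k) :=
    fun h => hu.not_eventuallyPeriodic h.of_shift
  have hsub : Set.range (window (fun k => u (N + k)) w.length) ⊆
      Set.range (window u w.length) := by
    rintro _ ⟨k, rfl⟩
    exact ⟨N + k, (window_shift N).symm⟩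
  have heq := Set.eq_of_subset_of_ncard_le hsub (by
    rw [hu.ncard_range_window, ← complexity_eq_ncard_range_window]
    exact lt_complexity_of_not_eventuallyPeriodic htail _) finite_range_window
  obtain ⟨k, hk⟩ : w ∈ Set.range (window (fun k => u (N + k)) w.length) :=
    heq ▸ ⟨i, factorAt_iff.1 hi⟩
  exact ⟨N + k, Nat.le_add_right N k, factorAt_iff.2 (window_shift N ▸ hk)⟩

theorem IsSturmian.window_succ_eq_of_not_factorAt (hu : IsSturmian u) (hw : RightSpecial u w)
    (h : window u w.length x = window u w.length y) (hx : ¬FactorAt u w x) :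
    window u w.length (x + 1) = window u w.length (y + 1) := by
  refine window_succ_eq h (next_eq_of_not_rightSpecial h fun hs => hx ?_)
  exact factorAt_iff.2 (hu.rightSpecial_unique hs hw length_window)

theorem IsSturmian.window_add_eq_of_not_factorAt (hu : IsSturmian u) (hw : RightSpecial u w)
    (h : window u w.length x = window u w.length y) (hx : ∀ k < n, ¬FactorAt u w (x + k)) :
    window u w.length (x + n) = window u w.length (y + n) := by
  induction n with
  | zero => exact h
  | succ n ih =>
    exact hu.window_succ_eq_of_not_factorAt hw (ih fun k hk => hx k (Nat.lt_succ_of_lt hk))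
      (hx n n.lt_succ_self)

namespace ConsecutiveOccurrences

theorem window_ne (h : ConsecutiveOccurrences u w i j) (hu : IsSturmian u)
    (hw : RightSpecial u w) (hix : i ≤ x) (hxy : x < y) (hyj : y < j) :
    window u w.length x ≠ window u w.length y := by
  intro heq
  obtain rfl | hlt := hix.eq_or_lt
  · exact h.not_between y hxy hyj (h.left.congr heq)
  · have hend := hu.window_add_eq_of_not_factorAt (n := j - y) hw heq fun k hk =>
      h.not_between _ (by lia) (by lia)
    rw [Nat.add_sub_of_le hyj.le] at hend
    exact h.not_between (x + (j - y)) (by lia) (by lia) (h.right.congr hend.symm)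

theorem injOn_window (h : ConsecutiveOccurrences u w i j) (hu : IsSturmian u)
    (hw : RightSpecial u w) : Set.InjOn (window u w.length) (Set.Ico i j) := by
  intro x hx y hy heq
  rcases lt_trichotomy x y with hlt | rfl | hlt
  · exact absurd heq (h.window_ne hu hw hx.1 hlt hy.2)
  · rfl
  · exact absurd heq.symm (h.window_ne hu hw hy.1 hlt hx.2)

theorem ncard_image_window (h : ConsecutiveOccurrences u w i j) (hu : IsSturmian u)
    (hw : RightSpecial u w) : (window u w.length '' Set.Ico i j).ncard = j - i := by
  rw [(h.injOn_window hu hw).ncard_image, Set.ncard_Ico_nat]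

theorem sub_le_length_add_one (h : ConsecutiveOccurrences u w i j) (hu : IsSturmian u)
    (hw : RightSpecial u w) : j - i ≤ w.length + 1 := by
  rw [← h.ncard_image_window hu hw, ← hu.ncard_range_window]
  exact Set.ncard_le_ncard (Set.image_subset_range _ _) finite_range_window

theorem succ_eq_of_window_eq_pred (h : ConsecutiveOccurrences u w i j) (hu : IsSturmian u)
    (hw : RightSpecial u w) (hy : y ∈ Set.Ico i j)
    (heq : window u w.length y = window u w.length x) (hx : ¬FactorAt u w x)
    (hx' : FactorAt u w (x + 1)) : y + 1 = j := by
  have hy' : FactorAt u w (y + 1) :=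
    hx'.congr (hu.window_succ_eq_of_not_factorAt hw heq.symm hx)
  by_contra hne
  exact h.not_between (y + 1) (Nat.lt_succ_of_le hy.1) (lt_of_le_of_ne hy.2 hne) hy'

theorem sub_le_length (h : ConsecutiveOccurrences u w i j) (hu : IsSturmian u)
    (htrue : true ∈ w) (hfalse : false ∈ w) (hls : LeftSpecial u w) (hrs : RightSpecial u w) :
    j - i ≤ w.length := by
  by_contra! hlong
  have hall : window u w.length '' Set.Ico i j = Set.range (window u w.length) :=
    Set.eq_of_subset_of_ncard_le (Set.image_subset_range _ _)
      (by rw [hu.ncard_range_window, h.ncard_image_window hu hrs]; exact hlong)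
      finite_range_window
  have hpred : ∀ x, FactorAt u w (x + 1) →
      window u w.length x = window u w.length (j - 1) := by
    intro x hx'
    have hx : ¬FactorAt u w x := fun hx => Bool.false_ne_true <|
      (hx.eq_of_mem_of_succ hx' hfalse).trans (hx.eq_of_mem_of_succ hx' htrue).symm
    obtain ⟨y, hy, heq⟩ := hall.ge ⟨x, rfl⟩
    rw [← heq, ← h.succ_eq_of_window_eq_pred hu hrs hy heq hx hx', Nat.add_sub_cancel]
  obtain ⟨⟨s, hs⟩, ⟨t, ht⟩⟩ := hls
  rw [factorAt_cons] at hs ht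
  have hst : u (s + 0) = u (t + 0) :=
    window_eq_window_iff.1 ((hpred s hs.2).trans (hpred t ht.2).symm) 0
      (List.length_pos_of_mem htrue)
  exact Bool.false_ne_true (ht.1.symm.trans (hst.symm.trans hs.1))

theorem window_eq_of_next_eq (h : ConsecutiveOccurrences u w i j) (hu : IsSturmian u)
    (hw : RightSpecial u w) (hp : FactorAt u w p) (hnext : u (i + w.length) = u (p + w.length))
    {k : ℕ} (hk : i + k ≤ j) : window u w.length (i + k) = window u w.length (p + k) := by
  cases k with
  | zero => exact h.left.window_eq hp
  | succ k =>
    have hstart := window_succ_eq (h.left.window_eq hp) hnext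
    have hend := hu.window_add_eq_of_not_factorAt (n := k) hw hstart fun l hl =>
      h.not_between _ (by lia) (by lia)
    rwa [add_assoc, add_assoc, add_comm 1 k] at hend

theorem window_mem_image_Ico (h : ConsecutiveOccurrences u w i j) (hu : IsSturmian u)
    (hw : RightSpecial u w) (h' : ConsecutiveOccurrences u w i' j')
    (hnext : u (i + w.length) = u (i' + w.length)) (hx : x ∈ Set.Ico i' j') :
    window u w.length x ∈ window u w.length '' Set.Ico i j := by
  obtain ⟨k, rfl⟩ := Nat.exists_eq_add_of_le hx.1
  have hcopy : ∀ l, i + l ≤ j → window u w.length (i + l) = window u w.length (i' + l) :=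
    fun l => h.window_eq_of_next_eq hu hw h'.left hnext
  have hk : i + k < j := by
    by_contra! hle
    have hj := hcopy (j - i) (Nat.add_sub_of_le h.lt.le).le
    rw [Nat.add_sub_of_le h.lt.le] at hj
    have := h.lt
    have := hx.2
    exact h'.not_between (i' + (j - i)) (by lia) (by lia) (h.right.congr hj)
  exact ⟨i + k, ⟨Nat.le_add_right i k, hk⟩, hcopy k hk.le⟩

theorem length_add_two_le (h : ConsecutiveOccurrences u w i j)
    (h' : ConsecutiveOccurrences u w i' j') (hu : IsSturmian u)
    (hi : FactorAt u (w ++ [true]) i) (hi' : FactorAt u (w ++ [false]) i') :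
    w.length + 2 ≤ (j - i) + (j' - i') := by
  have hw : RightSpecial u w := ⟨⟨i, hi⟩, ⟨i', hi'⟩⟩
  rw [factorAt_concat] at hi hi'
  set S := window u w.length '' Set.Ico i j
  set S' := window u w.length '' Set.Ico i' j'
  have hS : S.Finite := (Set.finite_Ico i j).image _
  have hS' : S'.Finite := (Set.finite_Ico i' j').image _
  have hcover : Set.range (window u w.length) ⊆ S ∪ S' := by
    rintro _ ⟨x, rfl⟩
    obtain ⟨y, hiy, hy⟩ := hu.recurrent _ ⟨x, factorAt_window (n := w.length)⟩ i
    rw [factorAt_iff, length_window] at hy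
    obtain ⟨p, q, hpq, hpy, hyq⟩ :=
      hu.recurrent.exists_consecutiveOccurrences_around h.left hiy
    rw [← hy]
    cases hp : u (p + w.length)
    · exact Or.inr (h'.window_mem_image_Ico hu hw hpq (hi'.2.trans hp.symm) ⟨hpy, hyq⟩)
    · exact Or.inl (h.window_mem_image_Ico hu hw hpq (hi.2.trans hp.symm) ⟨hpy, hyq⟩)
  have hinter : 0 < (S ∩ S').ncard := (Set.ncard_pos (hS.inter_of_left _)).2
    ⟨w, ⟨i, ⟨le_rfl, h.lt⟩, factorAt_iff.1 h.left⟩, ⟨i', ⟨le_rfl, h'.lt⟩, factorAt_iff.1 h'.left⟩⟩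
  calc w.length + 2 = (Set.range (window u w.length)).ncard + 1 := by
        rw [hu.ncard_range_window]
    _ ≤ (S ∪ S').ncard + (S ∩ S').ncard :=
      Nat.add_le_add (Set.ncard_le_ncard hcover (hS.union hS')) hinter
    _ = S.ncard + S'.ncard := Set.ncard_union_add_ncard_inter S S' hS hS'
    _ = (j - i) + (j' - i') := by
      rw [h.ncard_image_window hu hw, h'.ncard_image_window hu hw]

end ConsecutiveOccurrences

/- Take two occurrences of `v` at a distance `D > |v|` and the right special `w` of length
`D + |v|`. Occurrences of `w` are at most `D + |v| + 1` apart, so whenever the pair reappears, one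
of its two copies of `v` lies inside an occurrence of `w`. -/
theorem IsSturmian.exists_rightSpecial_infix (hu : IsSturmian u) (hv : IsFactor u v) :
    ∃ w, RightSpecial u w ∧ v <:+: w := by
  obtain ⟨s, hs⟩ := hv
  obtain ⟨t, hst, ht⟩ := hu.recurrent v ⟨s, hs⟩ (s + v.length + 1)
  obtain ⟨D, rfl⟩ := Nat.exists_eq_add_of_le (show s ≤ t by lia)
  obtain ⟨w, hw, hlen⟩ :=
    exists_rightSpecial_of_not_eventuallyPeriodic hu.not_eventuallyPeriodic (D + v.length)
  refine ⟨w, hw, ?_⟩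
  obtain ⟨q₀, hq₀⟩ := hw.1.of_prefix (List.prefix_append w [true])
  obtain ⟨y, hqy, hy⟩ :=
    hu.recurrent (window u (D + v.length) s) ⟨s, factorAt_window⟩ q₀
  rw [factorAt_iff, length_window, window_eq_window_iff] at hy
  have hy₁ : FactorAt u v y :=
    hs.congr (window_eq_window_iff.2 fun k hk => (hy k (by lia)).symm)
  have hy₂ : FactorAt u v (y + D) := ht.congr <| window_eq_window_iff.2 fun k hk => by
    rw [add_assoc, add_assoc, hy _ (by lia)]
  obtain ⟨p, q, hpq, hpy, hyq⟩ :=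
    hu.recurrent.exists_consecutiveOccurrences_around hq₀ hqy
  have hgap := hpq.sub_le_length_add_one hu hw
  rcases le_or_gt (y + v.length) (p + w.length) with hfits | hlate
  · obtain ⟨k, rfl⟩ := Nat.exists_eq_add_of_le hpy
    exact hpq.left.infix hy₁ (by lia)
  · obtain ⟨k, hk⟩ := Nat.exists_eq_add_of_le (show q ≤ y + D by lia)
    exact hpq.right.infix (hk ▸ hy₂) (by lia)

theorem IsSturmian.uniformlyRecurrent (hu : IsSturmian u) : UniformlyRecurrent u := by
  intro v hv
  obtain ⟨w, hw, hvw⟩ := hu.exists_rightSpecial_infix hv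
  obtain ⟨q₀, hq₀⟩ := hw.1.of_prefix (List.prefix_append w [true])
  refine ⟨q₀ + 2 * w.length + 2, fun k => ?_⟩
  obtain ⟨p, q, hpq, hpk, hkq⟩ :=
    hu.recurrent.exists_consecutiveOccurrences_around hq₀ (Nat.le_add_right q₀ k)
  obtain ⟨l, hl, hvl⟩ := hpq.right.exists_of_infix hvw
  have hgap := hpq.sub_le_length_add_one hu hw
  exact ⟨q + l, by lia, by lia, hvl⟩

theorem IsSturmian.exists_isReturnWord_length (hu : IsSturmian u) (htrue : true ∈ w)
    (hfalse : false ∈ w) (hls : LeftSpecial u w) (hrs : RightSpecial u w) :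
    ∃ r, IsReturnWord u w r ∧ w.length < 2 * r.length ∧ r.length ≤ w.length := by
  obtain ⟨⟨i, hi⟩, ⟨i', hi'⟩⟩ := id hrs
  obtain ⟨j, h⟩ := hu.recurrent.exists_consecutiveOccurrences (factorAt_concat.1 hi).1
  obtain ⟨j', h'⟩ := hu.recurrent.exists_consecutiveOccurrences (factorAt_concat.1 hi').1
  have hle := h.sub_le_length hu htrue hfalse hls hrs
  have hle' := h'.sub_le_length hu htrue hfalse hls hrs
  have hsum := h.length_add_two_le h' hu hi hi'
  rcases le_total (j' - i') (j - i) with hmax | hmax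
  · exact ⟨_, h.isReturnWord, by rw [length_window]; lia, by rw [length_window]; lia⟩
  · exact ⟨_, h'.isReturnWord, by rw [length_window]; lia, by rw [length_window]; lia⟩

end Sturmian

/-- a bispecial factor `b` of a Sturmian word containing both letters
has a return word `r` with `|b|/2 < |r| ≤ |b|` which is a prefix of `b`, with
`rr` a factor; `r` is primitive with index at least `2`. -/
theorem return_word_with_square (u : ℕ → Bool) (hst : IsSturmian u)
    (b : List Bool) (hb : IsFactor u b)
    (hA : true ∈ b) (hB : false ∈ b)
    (hls : LeftSpecial u b) (hrs : RightSpecial u b) :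
    ∃ r : List Bool, IsReturnWord u b r ∧
      b.length < 2 * r.length ∧ r.length ≤ b.length ∧ r <+: b ∧
      IsFactor u (r ++ r) ∧ Primitive r ∧ 2 ≤ index u r := by
  obtain ⟨r, hr, hlt, hle⟩ := hst.exists_isReturnWord_length hA hB hls hrs
  have hrr : IsFactor u (r ++ r) := hr.isFactor_append_self hle
  have hbdd : BddAbove (expSet u r) :=
    bddAbove_expSet hst.uniformlyRecurrent hst.not_eventuallyPeriodic r
  exact ⟨r, hr, hlt, hle, hr.prefix_of_length_le hle, hrr, hr.primitive,
    two_le_index hbdd hr.1 hrr⟩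

end SturmianPaper
end

section
/- Let β = [0,1,b₂,b₃,…] be irrational with β ∈ (1/2,1), let c ∈ ℕ, c ≥ 1, and let φ be the morphism A ↦ A^c B, B ↦ A. If u is a Sturmian word with slope β, then φ(u) is a Sturmian word with slope β' = (cβ + 1 − β)/(cβ + 1), whose continued fraction is β' = [0,1,c,b₂,b₃,…]. -/
open Filter Topology

namespace SturmianPaper

variable {A : Type*} [DecidableEq A]

/-!
Up to the orientation of the circle, a Sturmian word codes a rotation. Write `L = cβ + 1` and
`γ = β / L`, and embed the orbit of `x` under the exchange of `[0, β)` and `[β, 1)` into `ℝ / ℤ` by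
`x ↦ (x - 1) / L`. The exchange then becomes the map induced by the rotation by `-γ` on an arc of
length `1 / L`: a point coded `A` returns after `c + 1` steps, only the last of which starts in
`[0, γ)`, and a point coded `B` returns after one step, starting outside `[0, γ)`. Hence `φ(u)`
codes the rotation by `-γ`, and a coding of an irrational rotation is Sturmian because its factors
of length `n` correspond to the `n + 1` arcs cut out by `0, γ, …, nγ`.

The numerators and denominators of the convergents of `β' = 1 - γ` are, after a shift by one index,
the combinations `c p + (q - p)` and `c p + q` of those of `β`, so they satisfy the same recurrence.
-/

theorem factors_eq_range {α : Type*} (u : ℕ → α) (n : ℕ) :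
    {w | IsFactor u w ∧ w.length = n} =
      Set.range fun i => (List.range n).map fun j => u (i + j) := by
  ext w
  constructor
  · rintro ⟨⟨i, hi⟩, rfl⟩
    exact ⟨i, hi.symm⟩
  · rintro ⟨i, rfl⟩
    exact ⟨⟨i, by simp [FactorAt]⟩, by simp⟩

theorem ncard_range_eq_of_eq_iff {ι α β : Type*} {f : ι → α} {g : ι → β}
    (h : ∀ i j, f i = f j ↔ g i = g j) : (Set.range f).ncard = (Set.range g).ncard := by
  have hker : Setoid.ker f = Setoid.ker g := Setoid.ext h
  rw [← Nat.card_coe_set_eq, ← Nat.card_coe_set_eq,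
    ← Nat.card_congr (Setoid.quotientKerEquivRange f),
    ← Nat.card_congr (Setoid.quotientKerEquivRange g), hker]

theorem map_range_succ_eq_cons {α : Type*} (u : ℕ → α) (n : ℕ) :
    (List.range (n + 1)).map u = u 0 :: (List.range n).map fun i => u (i + 1) := by
  rw [List.range_succ_eq_map, List.map_cons, List.map_map]
  rfl

theorem count_true_map_range_succ (u : ℕ → Bool) (n : ℕ) :
    ((List.range (n + 1)).map u).count true =
      ((List.range n).map u).count true + if u n then 1 else 0 := by
  cases h : u n <;> simp [List.range_succ, h]

theorem map_range_eq_iff_count_true_eq (u v : ℕ → Bool) (n : ℕ) :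
    (List.range n).map u = (List.range n).map v ↔
      ∀ j ≤ n, ((List.range j).map u).count true = ((List.range j).map v).count true := by
  simp only [List.map_inj_left, List.mem_range]
  constructor
  · intro h j hj
    rw [List.map_congr_left fun i hi => h i ((List.mem_range.1 hi).trans_le hj)]
  · intro h j hj
    have hsucc := h (j + 1) hj
    rw [count_true_map_range_succ, count_true_map_range_succ, h j hj.le] at hsucc
    cases hu : u j <;> cases hv : v j <;> simp_all

theorem filter_le_eq_iff_card_eq {α : Type*} [LinearOrder α] (S : Finset α) (s t : α) :
    S.filter (· ≤ s) = S.filter (· ≤ t) ↔ (S.filter (· ≤ s)).card = (S.filter (· ≤ t)).card := by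
  refine ⟨congrArg _, fun h => ?_⟩
  have hmono {a b : α} (hab : a ≤ b) : S.filter (· ≤ a) ⊆ S.filter (· ≤ b) :=
    Finset.monotone_filter_right _ fun _ _ hx => le_trans hx hab
  rcases le_total s t with hst | hts
  · exact Finset.eq_of_subset_of_card_le (hmono hst) h.ge
  · exact (Finset.eq_of_subset_of_card_le (hmono hts) h.le).symm

theorem exists_Ioo_card_filter_le_eq {α : Type*} [LinearOrder α] (S : Finset α) {l r : α}
    (hlr : l < r) (hS : ∀ x ∈ S, x ∈ Set.Ioo l r) {k : ℕ} (hk : k ≤ S.card) :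
    ∃ a b, l ≤ a ∧ a < b ∧ b ≤ r ∧ ∀ t ∈ Set.Ioo a b, (S.filter (· ≤ t)).card = k := by
  induction S using Finset.induction_on_max generalizing r with
  | empty => exact ⟨l, r, le_rfl, hlr, le_rfl, fun t _ => by simpa using (Nat.le_zero.1 hk).symm⟩
  | insert m S hmax ih =>
    obtain ⟨hlm, hmr⟩ := hS m (Finset.mem_insert_self m S)
    have hmS : m ∉ S := fun h => (hmax m h).false
    rcases hk.eq_or_lt with rfl | hk
    · refine ⟨m, r, hlm.le, hmr, le_rfl, fun t ht => ?_⟩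
      rw [Finset.filter_true_of_mem]
      exact (Finset.forall_mem_insert ..).2 ⟨ht.1.le, fun x hx => ((hmax x hx).trans ht.1).le⟩
    · rw [Finset.card_insert_of_notMem hmS, Nat.lt_succ_iff] at hk
      obtain ⟨a, b, hla, hab, hbm, hcard⟩ :=
        ih hlm (fun x hx => ⟨(hS x (Finset.mem_insert_of_mem hx)).1, hmax x hx⟩) hk
      refine ⟨a, b, hla, hab, hbm.trans hmr.le, fun t ht => ?_⟩
      rw [Finset.filter_insert, if_neg (ht.2.trans_le hbm).not_ge, hcard t ht]

theorem floor_sub_eq_sub_ite {R : Type*} [Ring R] [LinearOrder R] [IsStrictOrderedRing R]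
    [FloorRing R] (x y : R) :
    ⌊x - y⌋ = ⌊x⌋ - ⌊y⌋ - if Int.fract y ≤ Int.fract x then 0 else 1 := by
  have hx := Int.floor_add_fract x
  have hy := Int.floor_add_fract y
  have hx₀ := Int.fract_nonneg x
  have hx₁ := Int.fract_lt_one x
  have hy₀ := Int.fract_nonneg y
  have hy₁ := Int.fract_lt_one y
  split_ifs with h <;> rw [Int.floor_eq_iff] <;> push_cast <;> constructor <;> grind

theorem fract_add_one_sub {R : Type*} [Ring R] [LinearOrder R] [IsStrictOrderedRing R]
    [FloorRing R] {y : R} (h₀ : 0 ≤ y) (h₁ : y ≤ 1) (x : R) :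
    Int.fract (x + (1 - y)) =
      if Int.fract x < y then Int.fract x + (1 - y) else Int.fract x - y := by
  have hx := Int.floor_add_fract x
  have hx₀ := Int.fract_nonneg x
  have hx₁ := Int.fract_lt_one x
  split_ifs with h <;> rw [Int.fract_eq_iff]
  · exact ⟨by grind, by grind, ⌊x⌋, by grind⟩
  · exact ⟨by grind, by grind, ⌊x⌋ + 1, by push_cast; grind⟩

theorem fract_natCast_mul_injective {γ : ℝ} (hγ : Irrational γ) :
    Function.Injective fun j : ℕ => Int.fract (j * γ) := by
  intro i j hij
  by_contra hne
  obtain ⟨z, hz⟩ := Int.fract_eq_fract.1 hij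
  have hsub : (i - j : ℤ) ≠ 0 := by omega
  refine (hγ.intCast_mul hsub).ne_int z ?_
  push_cast
  rw [sub_mul, hz]

theorem exists_fract_sub_natCast_mul_mem_Ioo {γ : ℝ} (hγ : Irrational γ) (ρ : ℝ) {a b : ℝ}
    (ha : 0 ≤ a) (hab : a < b) (hb : b ≤ 1) :
    ∃ i : ℕ, Int.fract (ρ - i * γ) ∈ Set.Ioo a b := by
  have : Fact ((0 : ℝ) < 1) := ⟨one_pos⟩
  have hdense : DenseRange fun n : ℕ => n • (γ : AddCircle (1 : ℝ)) := by
    rw [← denseRange_zsmul_iff_nsmul, AddCircle.denseRange_zsmul_coe_iff, div_one]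
    exact hγ
  let mk : ℝ → AddCircle (1 : ℝ) := fun s => s
  have hopen : IsOpen (Set.image mk (Set.Ioo (ρ - b) (ρ - a))) :=
    QuotientAddGroup.isOpenMap_coe _ isOpen_Ioo
  have hne := (Set.nonempty_Ioo.2 (sub_lt_sub_left hab ρ)).image mk
  obtain ⟨i, s, ⟨hbs, hsa⟩, hs⟩ := hdense.exists_mem_open hopen hne
  obtain ⟨z, hz⟩ : ∃ z : ℤ, z • (1 : ℝ) = s - i • γ := by
    rw [← AddCircle.coe_eq_zero_iff, AddCircle.coe_sub, AddCircle.coe_nsmul, sub_eq_zero]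
    exact hs
  have hfract : Int.fract (ρ - i * γ) = ρ - s := by
    rw [Int.fract_eq_iff]
    refine ⟨by linarith, by linarith, z, ?_⟩
    rw [zsmul_one, nsmul_eq_mul] at hz
    linarith
  exact ⟨i, by rw [hfract]; constructor <;> linarith⟩

theorem tendsto_div_natCast_of_abs_sub_le {f : ℕ → ℝ} {a C : ℝ}
    (h : ∀ n : ℕ, |f n - n * a| ≤ C) : Tendsto (fun n : ℕ => f n / n) atTop (𝓝 a) := by
  rw [tendsto_iff_norm_sub_tendsto_zero]
  refine squeeze_zero' (.of_forall fun _ => norm_nonneg _) ?_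
    (tendsto_const_div_atTop_nhds_zero_nat C)
  filter_upwards [eventually_gt_atTop 0] with n hn
  have hn : (0 : ℝ) < n := Nat.cast_pos.2 hn
  calc ‖f n / n - a‖ = |f n - n * a| / n := by
        rw [Real.norm_eq_abs, div_sub' hn.ne', abs_div, abs_of_pos hn]
    _ ≤ C / n := by gcongr; exact h n

/-- The coding of the orbit of `ρ` under the rotation `x ↦ x - γ` of `ℝ / ℤ`, with letter `B` on
`[0, γ)` and `A` on `[γ, 1)`. It turns in the direction opposite to `sturmianWord (1 - γ)`, as the
morphism `A ↦ AᶜB`, `B ↦ A` reverses the orientation of the circle. -/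
noncomputable def rotationWord (γ ρ : ℝ) : ℕ → Bool :=
  fun i => decide (γ ≤ Int.fract (ρ - i * γ))

theorem rotationWord_add (γ ρ : ℝ) (m i : ℕ) :
    rotationWord γ ρ (m + i) = rotationWord γ (ρ - m * γ) i := by
  simp only [rotationWord, Nat.cast_add, add_mul, sub_sub]

theorem rotationWord_eq_of_sub_eq_intCast {ρ σ : ℝ} {z : ℤ} (h : ρ - σ = z) (γ : ℝ) :
    rotationWord γ ρ = rotationWord γ σ := by
  funext i
  have hfract : Int.fract (ρ - i * γ) = Int.fract (σ - i * γ) :=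
    Int.fract_eq_fract.2 ⟨z, by rw [← h]; ring⟩
  rw [rotationWord, rotationWord, hfract]

theorem count_true_rotationWord_eq_floor {γ : ℝ} (h₀ : 0 ≤ γ) (h₁ : γ < 1) (ρ : ℝ) (n : ℕ) :
    (((List.range n).map (rotationWord γ ρ)).count true : ℤ) = n - (⌊ρ⌋ - ⌊ρ - n * γ⌋) := by
  induction n with
  | zero => simp
  | succ n ih =>
    have hstep := floor_sub_eq_sub_ite (ρ - n * γ) γ
    rw [Int.floor_eq_zero_iff.2 ⟨h₀, h₁⟩, Int.fract_eq_self.2 ⟨h₀, h₁⟩,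
      show ρ - n * γ - γ = ρ - (n + 1 : ℕ) * γ by push_cast; ring] at hstep
    rw [count_true_map_range_succ, Nat.cast_add, ih, hstep]
    simp only [rotationWord, decide_eq_true_eq]
    split_ifs <;> push_cast <;> ring

theorem count_true_rotationWord {γ : ℝ} (h₀ : 0 ≤ γ) (h₁ : γ < 1) (ρ : ℝ) (n : ℕ) :
    (((List.range n).map (rotationWord γ ρ)).count true : ℤ) =
      n - ⌊n * γ⌋ - if Int.fract (n * γ) ≤ Int.fract ρ then 0 else 1 := by
  rw [count_true_rotationWord_eq_floor h₀ h₁, floor_sub_eq_sub_ite]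
  ring

theorem tendsto_count_true_rotationWord {γ : ℝ} (h₀ : 0 ≤ γ) (h₁ : γ < 1) (ρ : ℝ) :
    Tendsto (fun n : ℕ => (((List.range n).map (rotationWord γ ρ)).count true : ℝ) / n) atTop
      (𝓝 (1 - γ)) := by
  refine tendsto_div_natCast_of_abs_sub_le (C := 1) fun n => ?_
  have hcount := congrArg (Int.cast : ℤ → ℝ) (count_true_rotationWord h₀ h₁ ρ n)
  push_cast at hcount
  have hfloor := Int.floor_add_fract (n * γ)
  have hn₀ := Int.fract_nonneg (n * γ)
  have hn₁ := Int.fract_lt_one (n * γ)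
  rw [hcount, abs_le]
  split_ifs <;> constructor <;> linarith

/-- The points `{γ}, …, {nγ}`, which together with `0` bound the arcs of intercepts `ρ` for which
`rotationWord γ ρ` has the same first `n` letters. -/
noncomputable def cutPoints (γ : ℝ) (n : ℕ) : Finset ℝ :=
  (Finset.Icc 1 n).image fun j : ℕ => Int.fract (j * γ)

theorem card_cutPoints {γ : ℝ} (hγ : Irrational γ) (n : ℕ) : (cutPoints γ n).card = n := by
  rw [cutPoints, Finset.card_image_of_injective _ (fract_natCast_mul_injective hγ), Nat.card_Icc,
    Nat.add_sub_cancel]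

theorem mem_Ioo_of_mem_cutPoints {γ : ℝ} (hγ : Irrational γ) {n : ℕ} {x : ℝ}
    (hx : x ∈ cutPoints γ n) : x ∈ Set.Ioo 0 1 := by
  obtain ⟨j, hj, rfl⟩ := Finset.mem_image.1 hx
  have hj₀ : j ≠ 0 := Nat.one_le_iff_ne_zero.1 (Finset.mem_Icc.1 hj).1
  exact ⟨Int.fract_pos.2 ((hγ.natCast_mul hj₀).ne_int _), Int.fract_lt_one _⟩

theorem map_range_rotationWord_eq_iff {γ : ℝ} (h₀ : 0 ≤ γ) (h₁ : γ < 1) (ρ σ : ℝ) (n : ℕ) :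
    (List.range n).map (rotationWord γ ρ) = (List.range n).map (rotationWord γ σ) ↔
      ((cutPoints γ n).filter (· ≤ Int.fract ρ)).card =
        ((cutPoints γ n).filter (· ≤ Int.fract σ)).card := by
  have hcount (j : ℕ) : ((List.range j).map (rotationWord γ ρ)).count true =
      ((List.range j).map (rotationWord γ σ)).count true ↔
      (Int.fract (j * γ) ≤ Int.fract ρ ↔ Int.fract (j * γ) ≤ Int.fract σ) := by
    rw [← Nat.cast_inj (R := ℤ), count_true_rotationWord h₀ h₁, count_true_rotationWord h₀ h₁,
      sub_right_inj]
    split_ifs with hρ hσ hσ <;> simp [hρ, hσ, -not_le]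
  simp only [map_range_eq_iff_count_true_eq, hcount, ← filter_le_eq_iff_card_eq,
    Finset.filter_inj', cutPoints, Finset.forall_mem_image, Finset.mem_Icc]
  refine ⟨fun h j hj => h j hj.2, fun h j hj => ?_⟩
  rcases j.eq_zero_or_pos with rfl | hj₀
  · simp
  · exact h ⟨hj₀, hj⟩

theorem range_card_filter_cutPoints {γ : ℝ} (hγ : Irrational γ) (ρ : ℝ) (n : ℕ) :
    (Set.range fun i : ℕ => ((cutPoints γ n).filter (· ≤ Int.fract (ρ - i * γ))).card) =
      Set.Iic n := by
  ext k
  constructor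
  · rintro ⟨i, rfl⟩
    exact (Finset.card_filter_le _ _).trans (card_cutPoints hγ n).le
  · intro hk
    obtain ⟨a, b, ha, hab, hb, hcard⟩ := exists_Ioo_card_filter_le_eq (cutPoints γ n) one_pos
      (fun _ => mem_Ioo_of_mem_cutPoints hγ) ((card_cutPoints hγ n).symm ▸ hk)
    obtain ⟨i, hi⟩ := exists_fract_sub_natCast_mul_mem_Ioo hγ ρ ha hab hb
    exact ⟨i, hcard _ hi⟩

theorem isSturmian_rotationWord {γ : ℝ} (hγ : Irrational γ) (h₀ : 0 ≤ γ) (h₁ : γ < 1) (ρ : ℝ) :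
    IsSturmian (rotationWord γ ρ) := by
  intro n
  rw [complexity, factors_eq_range]
  simp only [rotationWord_add]
  rw [ncard_range_eq_of_eq_iff fun i j => map_range_rotationWord_eq_iff h₀ h₁ _ _ n,
    range_card_filter_cutPoints hγ, ← Finset.coe_Iic, Set.ncard_coe_finset, Nat.card_Iic]

theorem sturmianWord_succ (α x : ℝ) (n : ℕ) :
    sturmianWord α x (n + 1) = sturmianWord α (x + (1 - α)) n := by
  simp only [sturmianWord, Nat.cast_add, Nat.cast_one, add_mul, one_mul, add_assoc,
    add_comm (1 - α)]

theorem phiW_map_range_succ_sturmianWord (c : ℕ) (α x : ℝ) (k : ℕ) :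
    phiW c ((List.range (k + 1)).map (sturmianWord α x)) =
      (if Int.fract x < α then List.replicate c true ++ [false] else [true]) ++
        phiW c ((List.range k).map (sturmianWord α (x + (1 - α)))) := by
  have hzero : sturmianWord α x 0 = decide (Int.fract x < α) := by simp [sturmianWord]
  rw [map_range_succ_eq_cons]
  simp only [phiW, sturmianWord_succ, hzero, List.map_cons, List.flatten_cons, decide_eq_true_eq]

section Induced

variable {β : ℝ} (hβ₀ : 0 ≤ β) (c : ℕ)
include hβ₀

theorem rotationWord_induced_apply {y : ℝ} {j : ℕ} (h₀ : 0 ≤ y + (c - j) * β)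
    (h₁ : y + (c - j) * β < c * β + 1) :
    rotationWord (β / (c * β + 1)) ((y - 1) / (c * β + 1)) j =
      decide (β ≤ y + (c - j) * β) := by
  have hL : 0 < c * β + 1 := by positivity
  have hfract : Int.fract ((y - 1) / (c * β + 1) - j * (β / (c * β + 1))) =
      (y + (c - j) * β) / (c * β + 1) := by
    rw [Int.fract_eq_iff, div_lt_one hL]
    refine ⟨by positivity, h₁, -1, ?_⟩
    push_cast
    field_simp
    ring
  simp only [rotationWord, hfract, div_le_div_iff_of_pos_right hL]

theorem map_range_rotationWord_of_lt (hβ₁ : β ≤ 1) {y : ℝ} (hy₀ : 0 ≤ y) (hyβ : y < β) :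
    (List.range (c + 1)).map (rotationWord (β / (c * β + 1)) ((y - 1) / (c * β + 1))) =
      List.replicate c true ++ [false] := by
  rw [List.range_succ, List.map_append, List.map_singleton]
  congr 1
  · refine List.eq_replicate_iff.2 ⟨by simp, List.forall_mem_map.2 fun j hj => ?_⟩
    have hjc : (j : ℝ) + 1 ≤ c := by exact_mod_cast List.mem_range.1 hj
    have hlow : β ≤ (c - j) * β := le_mul_of_one_le_left hβ₀ (by linarith)
    have hup : (c - j) * β ≤ c * β := by gcongr; linarith [j.cast_nonneg (α := ℝ)]
    rw [rotationWord_induced_apply hβ₀ c (by linarith) (by linarith), decide_eq_true_eq]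
    linarith
  · have hcβ : 0 ≤ c * β := by positivity
    rw [rotationWord_induced_apply hβ₀ c (by linarith) (by linarith)]
    simpa using hyβ

theorem rotationWord_zero_of_le {y : ℝ} (hβy : β ≤ y) (hy₁ : y < 1) :
    rotationWord (β / (c * β + 1)) ((y - 1) / (c * β + 1)) 0 = true := by
  have hcβ : 0 ≤ c * β := by positivity
  rw [rotationWord_induced_apply hβ₀ c (by push_cast; linarith) (by push_cast; linarith),
    decide_eq_true_eq]
  push_cast
  linarith

theorem exists_phiW_map_range_sturmianWord_eq (hβ₁ : β ≤ 1) (x : ℝ) (k : ℕ) :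
    ∃ l ≥ k, phiW c ((List.range k).map (sturmianWord β x)) =
      (List.range l).map (rotationWord (β / (c * β + 1)) ((Int.fract x - 1) / (c * β + 1))) := by
  induction k generalizing x with
  | zero => exact ⟨0, le_rfl, rfl⟩
  | succ k ih =>
    obtain ⟨l, hkl, hl⟩ := ih (x + (1 - β))
    rw [phiW_map_range_succ_sturmianWord, hl]
    have hnext := fract_add_one_sub hβ₀ hβ₁ x
    split_ifs at hnext ⊢ with hxβ
    · refine ⟨(c + 1) + l, by omega, ?_⟩
      rw [List.range_add, List.map_append,
        map_range_rotationWord_of_lt hβ₀ c hβ₁ (Int.fract_nonneg x) hxβ, List.map_map, hnext]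
      simp only [Function.comp_def, rotationWord_add]
      rw [rotationWord_eq_of_sub_eq_intCast (z := 1)]
      push_cast
      field_simp
      ring
    · refine ⟨1 + l, by omega, ?_⟩
      rw [List.range_add, List.map_append, List.range_one, List.map_singleton,
        rotationWord_zero_of_le hβ₀ c (not_lt.1 hxβ) (Int.fract_lt_one x), List.map_map, hnext]
      simp only [Function.comp_def, rotationWord_add]
      rw [rotationWord_eq_of_sub_eq_intCast (z := 0)]
      push_cast
      field_simp
      ring

theorem phiInf_sturmianWord (hβ₁ : β ≤ 1) (x : ℝ) :
    phiInf c (sturmianWord β x) =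
      rotationWord (β / (c * β + 1)) ((Int.fract x - 1) / (c * β + 1)) := by
  funext n
  obtain ⟨l, hl, hword⟩ := exists_phiW_map_range_sturmianWord_eq hβ₀ c hβ₁ x (n + 1)
  rw [phiInf, hword, List.getD_eq_getElem _ _ (by simpa using hl), List.getElem_map,
    List.getElem_range]

end Induced

theorem irrational_div_natCast_mul_add_one {x : ℝ} (hx : Irrational x) (c : ℕ) :
    Irrational (x / (c * x + 1)) := by
  have hinv : x / (c * x + 1) = (x⁻¹ + c)⁻¹ := by
    rw [← one_div, inv_eq_one_div, div_add' _ _ _ hx.ne_zero, one_div_div, add_comm]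
  rw [hinv]
  exact (hx.inv.add_natCast c).inv

/-- The recurrence `xₙ₊₂ = bₙ₊₂ xₙ₊₁ + xₙ` satisfied by the numerators and by the denominators of
the convergents of `[b₀, b₁, b₂, …]`; the partial quotients `b 0` and `b 1` only enter through the
initial values, which are left free. -/
def ContinuantRec (b x : ℕ → ℕ) : Prop := ∀ N, x (N + 2) = b (N + 2) * x (N + 1) + x N

namespace ContinuantRec

variable {b x y : ℕ → ℕ}

theorem pos (hx : ContinuantRec b x) (h₀ : 0 < x 0) (h₁ : 0 < x 1) (N : ℕ) : 0 < x N := by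
  induction N using Nat.twoStepInduction with
  | zero => exact h₀
  | one => exact h₁
  | more N ih _ => rw [hx]; positivity

theorem le (hx : ContinuantRec b x) (hy : ContinuantRec b y) (h₀ : x 0 ≤ y 0) (h₁ : x 1 ≤ y 1)
    (N : ℕ) : x N ≤ y N := by
  induction N using Nat.twoStepInduction with
  | zero => exact h₀
  | one => exact h₁
  | more N ih ih' => rw [hx, hy]; gcongr

theorem add (hx : ContinuantRec b x) (hy : ContinuantRec b y) :
    ContinuantRec b fun N => x N + y N := by
  intro N
  simp only [hx N, hy N]
  ring

theorem const_mul (hx : ContinuantRec b x) (c : ℕ) : ContinuantRec b fun N => c * x N := by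
  intro N
  simp only [hx N]
  ring

theorem sub (hx : ContinuantRec b x) (hy : ContinuantRec b y) (hle : ∀ N, y N ≤ x N) :
    ContinuantRec b fun N => x N - y N := by
  intro N
  zify [hle]
  simp only [hx N, hy N]
  push_cast
  ring

theorem cons (hx : ContinuantRec b x) {a : ℕ → ℕ} (ha : ∀ n, 2 ≤ n → a (n + 1) = b n) {s : ℕ}
    (hs : x 1 = a 2 * x 0 + s) : ContinuantRec a fun N => Nat.casesOn N s x
  | 0 => hs
  | N + 1 => by rw [ha (N + 2) (Nat.le_add_left 2 N)]; exact hx N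

end ContinuantRec

theorem exists_convergents_phi_slope {β : ℝ} (hβ : 0 ≤ β) (c : ℕ) {b p q : ℕ → ℕ}
    (hq : ContinuantRec b q) (hq0 : q 0 = 1) (hq1 : q 1 = 1)
    (hp : ContinuantRec b p) (hp0 : p 0 = 0) (hp1 : p 1 = 1)
    (hcf : Tendsto (fun N => (p N : ℝ) / (q N : ℝ)) atTop (𝓝 β))
    {a : ℕ → ℕ} (ha2 : a 2 = c) (ha : ∀ n, 2 ≤ n → a (n + 1) = b n) :
    ∃ p' q' : ℕ → ℕ, q' 0 = 1 ∧ q' 1 = 1 ∧ p' 0 = 0 ∧ p' 1 = 1 ∧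
      ContinuantRec a q' ∧ ContinuantRec a p' ∧
      Tendsto (fun N => (p' N : ℝ) / (q' N : ℝ)) atTop
        (𝓝 ((c * β + 1 - β) / (c * β + 1))) := by
  have hpq : ∀ N, p N ≤ q N := hp.le hq (by omega) (by omega)
  refine ⟨fun N => Nat.casesOn N 0 fun N => c * p N + (q N - p N),
    fun N => Nat.casesOn N 1 fun N => c * p N + q N, rfl, by simp [hp0, hq0], rfl,
    by simp [hp0, hq0], ((hp.const_mul c).add hq).cons ha ?_,
    ((hp.const_mul c).add (hq.sub hp hpq)).cons ha ?_, ?_⟩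
  · simp [hp0, hq0, hp1, hq1, ha2]
  · simp [hp0, hq0, hp1, hq1, ha2]
  rw [← tendsto_add_atTop_iff_nat 1]
  have hden := (hcf.const_mul (c : ℝ)).add_const 1
  refine ((hden.sub hcf).div hden (by positivity)).congr fun N => ?_
  have hqN : (0 : ℝ) < q N := Nat.cast_pos.2 (hq.pos (by omega) (by omega) N)
  simp only [Pi.div_apply, Nat.cast_add, Nat.cast_mul, Nat.cast_sub (hpq N)]
  field_simp
  ring

theorem morphism_image_sturmian_general {β : ℝ} (x₀ : ℝ) (hirr : Irrational β)
    (hβ₀ : 0 < β) (hβ₁ : β < 1) (c : ℕ) {b p q : ℕ → ℕ}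
    (hq0 : q 0 = 1) (hq1 : q 1 = 1) (hq : ContinuantRec b q)
    (hp0 : p 0 = 0) (hp1 : p 1 = 1) (hp : ContinuantRec b p)
    (hcf : Tendsto (fun N => (p N : ℝ) / (q N : ℝ)) atTop (𝓝 β)) :
    IsSturmian (phiInf c (sturmianWord β x₀)) ∧
    Tendsto (fun n : ℕ => (((List.range n).map (phiInf c (sturmianWord β x₀))).count true : ℝ) / n)
      atTop (𝓝 ((c * β + 1 - β) / (c * β + 1))) ∧
    ∀ a : ℕ → ℕ, a 2 = c → (∀ n, 2 ≤ n → a (n + 1) = b n) →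
      ∃ p' q' : ℕ → ℕ, q' 0 = 1 ∧ q' 1 = 1 ∧ p' 0 = 0 ∧ p' 1 = 1 ∧
        ContinuantRec a q' ∧ ContinuantRec a p' ∧
        Tendsto (fun N => (p' N : ℝ) / (q' N : ℝ)) atTop
          (𝓝 ((c * β + 1 - β) / (c * β + 1))) := by
  have hL : 0 < c * β + 1 := by positivity
  have hγ₀ : 0 ≤ β / (c * β + 1) := by positivity
  have hγ₁ : β / (c * β + 1) < 1 := by
    have hcβ : 0 ≤ c * β := by positivity
    rw [div_lt_one hL]
    linarith
  have hslope : (c * β + 1 - β) / (c * β + 1) = 1 - β / (c * β + 1) := by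
    rw [sub_div, div_self hL.ne']
  refine ⟨?_, ?_, fun _ => exists_convergents_phi_slope hβ₀.le c hq hq0 hq1 hp hp0 hp1 hcf⟩
  · rw [phiInf_sturmianWord hβ₀.le c hβ₁.le]
    exact isSturmian_rotationWord (irrational_div_natCast_mul_add_one hirr c) hγ₀ hγ₁ _
  · rw [phiInf_sturmianWord hβ₀.le c hβ₁.le, hslope]
    exact tendsto_count_true_rotationWord hγ₀ hγ₁ _

/-- the morphism `φ : A ↦ AᶜB, B ↦ A` maps a Sturmian word of slope
`β = [0,1,b₂,b₃,…] ∈ (1/2,1)` to a Sturmian word whose slope (density of `A`) is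
`β' = (cβ + 1 − β)/(cβ + 1)`, with continued fraction `β' = [0,1,c,b₂,b₃,…]`. -/
theorem morphism_image_sturmian (β x₀ : ℝ) (hirr : Irrational β)
    (hβ : 1/2 < β) (hβ1 : β < 1) (hx0 : 0 ≤ x₀) (hx1 : x₀ < 1)
    (c : ℕ) (hc : 1 ≤ c)
    (b p q : ℕ → ℕ) (hb1 : b 1 = 1) (hbpos : ∀ n, 1 ≤ n → 1 ≤ b n)
    (hq0 : q 0 = 1) (hq1 : q 1 = 1)
    (hqrec : ∀ N, q (N + 2) = b (N + 2) * q (N + 1) + q N)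
    (hp0 : p 0 = 0) (hp1 : p 1 = 1)
    (hprec : ∀ N, p (N + 2) = b (N + 2) * p (N + 1) + p N)
    (hcf : Tendsto (fun N => (p N : ℝ) / (q N : ℝ)) atTop (nhds β)) :
    IsSturmian (phiInf c (sturmianWord β x₀)) ∧
    Tendsto (fun n => ((((List.range n).map (phiInf c (sturmianWord β x₀))).count true : ℝ)) / (n : ℝ))
      atTop (nhds ((c * β + 1 - β) / (c * β + 1))) ∧
    (∀ a' : ℕ → ℕ, a' 1 = 1 → a' 2 = c → (∀ n, 2 ≤ n → a' (n + 1) = b n) →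
      (∃ p' q' : ℕ → ℕ, q' 0 = 1 ∧ q' 1 = 1 ∧ p' 0 = 0 ∧ p' 1 = 1 ∧
      (∀ N, q' (N + 2) = a' (N + 2) * q' (N + 1) + q' N) ∧
      (∀ N, p' (N + 2) = a' (N + 2) * p' (N + 1) + p' N) ∧
      Tendsto (fun N => (p' N : ℝ) / (q' N : ℝ)) atTop
        (nhds ((c * β + 1 - β) / (c * β + 1))))) :=
  have ⟨hsturm, hslope, hfrac⟩ := morphism_image_sturmian_general x₀ hirr (by linarith) hβ1 c
    hq0 hq1 hqrec hp0 hp1 hprec hcf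
  ⟨hsturm, hslope, fun a' _ => hfrac a'⟩

end SturmianPaper
end

section
/- The index of a Sturmian word u with slope α = [0,1,a₂,a₃,…] equals sup_{N≥1} (2 + a_{N+1} + (q_{N−1} − 2)/q_N), where q_N are the convergent denominators of α. -/
open Filter Topology

namespace SturmianPaper

variable {A : Type*} [DecidableEq A]

/-!
Write `β = 1 - α`. The letter `u n` records whether `⌊x₀ + n β⌋` increases at step `n`, so `u` has
period `m` along a window exactly when, for some integer `G`, no integer separates `x₀ + j β` from
`x₀ + j β + (m β - G)` for any `j` in the window. Let `Q ≤ m < Q'` with `Q`, `Q'` consecutive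
convergent denominators. Best approximation gives `|m β - G| ≥ ‖Q β‖`, while among any `Q + Q'`
consecutive orbit points one comes within `‖Q β‖` of an integer on the prescribed side; this bounds
the excess of the window over `m` by `Q + Q' - 2`, so that the exponent is largest at `m = Q`.
There the bound is attained, because `n β` with `0 < n < Q + Q'` never lies strictly between the
signed errors of the two convergents modulo `1`.
-/

theorem exists_crossing {S T : Set ℝ} {δ η : ℝ} (hδ : 0 < δ) (hne : (S ∩ T).Nonempty)
    (hT : BddAbove T) (hstep : ∀ x ∈ S, ∃ x' ∈ S, x + δ ≤ x' ∧ x' ≤ x + η) :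
    ∃ x ∈ S ∩ T, ∃ x' ∈ S \ T, x' ≤ x + η := by
  by_contra! hstay
  have hbdd : BddAbove (S ∩ T) := hT.mono Set.inter_subset_right
  obtain ⟨x, hx, hlt⟩ := exists_lt_of_lt_csSup hne (sub_lt_self (sSup (S ∩ T)) hδ)
  obtain ⟨x', hx', hδx', hx'η⟩ := hstep x hx.1
  have hx'T : x' ∈ T := by
    by_contra hx'T
    exact (hstay x hx x' ⟨hx', hx'T⟩).not_ge hx'η
  linarith [le_csSup hbdd ⟨hx', hx'T⟩]

/-- The lifts to `ℝ` of the first `M` points of the orbit of `y` under the rotation of `ℝ / ℤ`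
by `β`. -/
def liftedOrbit (β y : ℝ) (M : ℕ) : Set ℝ := {x | ∃ n < M, ∃ k : ℤ, x = y + n * β - k}

theorem neg_mem_liftedOrbit_neg {β y x : ℝ} {M : ℕ} :
    -x ∈ liftedOrbit (-β) (-y) M ↔ x ∈ liftedOrbit β y M := by
  constructor <;> rintro ⟨n, hn, k, hx⟩ <;>
    exact ⟨n, hn, -k, by push_cast; linarith⟩

theorem exists_mem_liftedOrbit_lt (β y s : ℝ) {M : ℕ} (hM : 0 < M) :
    ∃ x ∈ liftedOrbit β y M, x < s := by
  obtain ⟨k, hk⟩ := exists_int_gt (y - s)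
  exact ⟨y - k, ⟨0, hM, k, by simp⟩, by linarith⟩

theorem add_mem_or_sub_mem_liftedOrbit {β y x : ℝ} {Q Q' : ℕ} (P P' : ℤ)
    (hx : x ∈ liftedOrbit β y (Q + Q')) :
    x + (Q * β - P) ∈ liftedOrbit β y (Q + Q') ∨
      x - (Q' * β - P') ∈ liftedOrbit β y (Q + Q') := by
  obtain ⟨n, hn, k, rfl⟩ := hx
  rcases lt_or_ge n Q' with hnQ | hnQ
  · exact .inl ⟨n + Q, by omega, k + P, by push_cast; ring⟩
  · exact .inr ⟨n - Q', by omega, k - P', by push_cast [Nat.cast_sub hnQ]; ring⟩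

/-- The fractions `P / Q` and `P' / Q'` lie strictly on either side of `β` and form a unimodular
pair. The order of the two fractions is free, so that one statement covers convergents of either
parity. -/
structure IsFareyPair (β : ℝ) (P : ℤ) (Q : ℕ) (P' : ℤ) (Q' : ℕ) : Prop where
  det : |P' * Q - P * Q'| = 1
  straddle : (Q * β - P) * (Q' * β - P') < 0

namespace IsFareyPair

variable {β : ℝ} {P P' : ℤ} {Q Q' : ℕ}

theorem neg (h : IsFareyPair β P Q P' Q') : IsFareyPair (-β) (-P) Q (-P') Q' where
  det := by rw [← h.det, ← abs_neg]; ring_nf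
  straddle := by convert h.straddle using 1; push_cast; ring

theorem one_sub (h : IsFareyPair β P Q P' Q') :
    IsFareyPair (1 - β) (Q - P) Q (Q' - P') Q' where
  det := by rw [← h.det, ← abs_neg]; ring_nf
  straddle := by convert h.straddle using 1; push_cast; ring

theorem pos_neg_or_neg_pos (h : IsFareyPair β P Q P' Q') :
    (0 < Q * β - P ∧ Q' * β - P' < 0) ∨ (Q * β - P < 0 ∧ 0 < Q' * β - P') :=
  mul_neg_iff.1 h.straddle

theorem det_eq_one (h : IsFareyPair β P Q P' Q') (hpos : 0 < Q * β - P) (hneg : Q' * β - P' < 0) :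
    P' * Q - P * Q' = 1 := by
  have hdet : (0 : ℝ) ≤ P' * Q - P * Q' := by
    have h1 : 0 ≤ Q' * (Q * β - P) := by positivity
    have h2 : Q * (Q' * β - P') ≤ 0 := mul_nonpos_of_nonneg_of_nonpos (by positivity) hneg.le
    linarith
  rw [← h.det, abs_of_nonneg (by exact_mod_cast hdet)]

theorem notMem_Ioo_of_pos (h : IsFareyPair β P Q P' Q') (hpos : 0 < Q * β - P)
    (hneg : Q' * β - P' < 0) {m : ℕ} (hm : 0 < m) (hmQ : m < Q + Q') (k : ℤ) :
    m * β - k ∉ Set.Ioo (Q' * β - P') (Q * β - P) := by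
  rintro ⟨hl, hr⟩
  have hdet := h.det_eq_one hpos hneg
  -- Coordinates of `(m, k)` in the lattice basis `(Q, P)`, `(Q', P')`.
  obtain ⟨x, hx⟩ : ∃ x : ℤ, x = m * P' - k * Q' := ⟨_, rfl⟩
  obtain ⟨y, hy⟩ : ∃ y : ℤ, y = k * Q - m * P := ⟨_, rfl⟩
  have hmxy : (m : ℤ) = x * Q + y * Q' := by rw [hx, hy]; linear_combination (-m : ℤ) * hdet
  have hkxy : k = x * P + y * P' := by rw [hx, hy]; linear_combination (-k) * hdet
  have herr : m * β - k = x * (Q * β - P) + y * (Q' * β - P') := by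
    have hm' : (m : ℝ) = x * Q + y * Q' := by exact_mod_cast hmxy
    have hk' : (k : ℝ) = x * P + y * P' := by exact_mod_cast hkxy
    rw [hm', hk']; ring
  rw [herr] at hl hr
  rcases le_or_gt y 0 with hy0 | hy0
  · have hx0 : x ≤ 0 := by
      by_contra! hx1
      have hx1' : (1 : ℝ) ≤ x := by exact_mod_cast hx1
      have hy0' : (y : ℝ) ≤ 0 := by exact_mod_cast hy0
      nlinarith
    nlinarith
  · have hx1 : 1 ≤ x := by
      by_contra! hx0
      have hx0' : (x : ℝ) ≤ 0 := by exact_mod_cast Int.lt_add_one_iff.1 hx0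
      have hy1' : (1 : ℝ) ≤ y := by exact_mod_cast hy0
      nlinarith
    nlinarith

theorem notMem_uIoo (h : IsFareyPair β P Q P' Q') {m : ℕ} (hm : 0 < m) (hmQ : m < Q + Q')
    (k : ℤ) : m * β - k ∉ Set.uIoo (Q * β - P) (Q' * β - P') := by
  rcases h.pos_neg_or_neg_pos with ⟨hQ, hQ'⟩ | ⟨hQ, hQ'⟩
  · rw [Set.uIoo_of_gt (hQ'.trans hQ)]
    exact h.notMem_Ioo_of_pos hQ hQ' hm hmQ k
  · rw [Set.uIoo_of_lt (hQ.trans hQ')]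
    have hgap := h.neg.notMem_Ioo_of_pos (by push_cast; linarith) (by push_cast; linarith) hm hmQ
      (-k)
    rintro ⟨hl, hr⟩
    exact hgap ⟨by push_cast; linarith, by push_cast; linarith⟩

theorem abs_le_abs_of_lt (h : IsFareyPair β P Q P' Q') {m : ℕ} (hm : 0 < m) (hmQ : m < Q')
    (k : ℤ) : |Q * β - P| ≤ |m * β - k| := by
  have hgap := h.notMem_uIoo hm (by omega) k
  -- If `m β - k` lies beyond the error of `P' / Q'`, then so does its translate by `Q β - P`.
  have hgap_add := h.notMem_uIoo (m := m + Q) (by omega) (by omega) (k + P)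
  push_cast at hgap_add
  rcases h.pos_neg_or_neg_pos with ⟨hQ, hQ'⟩ | ⟨hQ, hQ'⟩
  · rw [Set.uIoo_of_gt (hQ'.trans hQ), Set.mem_Ioo, not_and_or, not_lt, not_lt] at hgap hgap_add
    rw [abs_of_pos hQ, le_abs]
    rcases hgap with hgap | hgap
    · right; rcases hgap_add with h' | h' <;> linarith
    · exact .inl hgap
  · rw [Set.uIoo_of_lt (hQ.trans hQ'), Set.mem_Ioo, not_and_or, not_lt, not_lt] at hgap hgap_add
    rw [abs_of_neg hQ, le_abs]
    rcases hgap with hgap | hgap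
    · right; linarith
    · left; rcases hgap_add with h' | h' <;> linarith

theorem exists_liftedOrbit_crossing (h : IsFareyPair β P Q P' Q') (hpos : 0 < Q * β - P)
    (hneg : Q' * β - P' < 0) (hle : |Q' * β - P'| ≤ |Q * β - P|) (y : ℝ) {s : ℝ} {T : Set ℝ}
    (hsub : Set.Iio s ⊆ T) (hT : BddAbove T) :
    ∃ x ∈ liftedOrbit β y (Q + Q') ∩ T, ∃ x' ∈ liftedOrbit β y (Q + Q') \ T,
      x' ≤ x + |Q * β - P| := by
  have hQQ' : 0 < Q + Q' := by
    by_contra! h0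
    obtain ⟨rfl, rfl⟩ : Q = 0 ∧ Q' = 0 := by omega
    simpa using h.det
  obtain ⟨x₁, hx₁, hx₁s⟩ := exists_mem_liftedOrbit_lt β y s hQQ'
  rw [abs_of_neg hneg, abs_of_pos hpos] at hle
  rw [abs_of_pos hpos]
  refine exists_crossing (neg_pos.2 hneg) ⟨x₁, hx₁, hsub hx₁s⟩ hT fun x hx => ?_
  rcases add_mem_or_sub_mem_liftedOrbit P P' hx with hx' | hx'
  · exact ⟨_, hx', by linarith, le_rfl⟩
  · exact ⟨_, hx', by linarith, by linarith⟩

theorem exists_mem_liftedOrbit_Ico (h : IsFareyPair β P Q P' Q')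
    (hle : |Q' * β - P'| ≤ |Q * β - P|) (y s : ℝ) :
    ∃ x ∈ liftedOrbit β y (Q + Q'), x ∈ Set.Ico s (s + |Q * β - P|) := by
  rcases h.pos_neg_or_neg_pos with ⟨hQ, hQ'⟩ | ⟨hQ, hQ'⟩
  · obtain ⟨x, ⟨-, hxs⟩, x', ⟨hx', hsx'⟩, hle'⟩ :=
      h.exists_liftedOrbit_crossing hQ hQ' hle y subset_rfl (bddAbove_Iio (a := s))
    exact ⟨x', hx', not_lt.1 hsx', hle'.trans_lt (add_lt_add_left hxs _)⟩
  · have habs : ∀ (n : ℕ) (k : ℤ), |n * -β - (-k : ℤ)| = |n * β - k| := fun n k => by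
      rw [← abs_neg]; push_cast; ring_nf
    obtain ⟨x, ⟨-, hxs⟩, x', ⟨hx', hsx'⟩, hle'⟩ :=
      h.neg.exists_liftedOrbit_crossing (by push_cast; linarith) (by push_cast; linarith)
        (by rwa [habs, habs]) (-y) Set.Iio_subset_Iic_self (bddAbove_Iic (a := -(s + |Q * β - P|)))
    rw [habs] at hle'
    rw [Set.mem_Iic] at hxs hsx'
    exact ⟨-x', neg_mem_liftedOrbit_neg.1 (by rwa [neg_neg]), by linarith, by linarith⟩

theorem exists_intCast_mem_uIoc (h : IsFareyPair β P Q P' Q')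
    (hle : |Q' * β - P'| ≤ |Q * β - P|) (y : ℝ) {d : ℝ} (hd : |Q * β - P| ≤ |d|) :
    ∃ n < Q + Q', ∃ k : ℤ, (k : ℝ) ∈ Set.uIoc (y + n * β) (y + n * β + d) := by
  rcases le_total 0 d with hd0 | hd0
  · rw [abs_of_nonneg hd0] at hd
    obtain ⟨_, ⟨n, hn, k, rfl⟩, hl, hr⟩ := h.exists_mem_liftedOrbit_Ico hle y (-d)
    exact ⟨n, hn, k, Set.mem_uIoc.2 (.inl ⟨by linarith, by linarith⟩)⟩
  · rw [abs_of_nonpos hd0] at hd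
    obtain ⟨_, ⟨n, hn, k, rfl⟩, hl, hr⟩ := h.exists_mem_liftedOrbit_Ico hle y 0
    exact ⟨n, hn, k, Set.mem_uIoc.2 (.inr ⟨by linarith, by linarith⟩)⟩

end IsFareyPair

variable {B : Type*}

/-- The factor of length `m + K` of `u` starting at position `i` has period `m`; it is a power of
exponent `(m + K) / m`. -/
def HasPeriodOn (u : ℕ → B) (m i K : ℕ) : Prop := ∀ j < K, u (i + j + m) = u (i + j)

theorem factorAt_map_range (u : ℕ → B) (i n : ℕ) :
    FactorAt u ((List.range n).map fun j => u (i + j)) i := by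
  simp only [FactorAt, List.length_map, List.length_range]

theorem FactorAt.getElem?_eq {u : ℕ → B} {v : List B} {i j : ℕ} (h : FactorAt u v i)
    (hj : j < v.length) : v[j]? = some (u (i + j)) := by
  rw [h]
  simp [hj]

theorem expSet_nonempty {u : ℕ → B} {w : List B} (h : IsFactor u w) (hw : w ≠ []) :
    (expSet u w).Nonempty :=
  ⟨_, w, h, ⟨hw, le_rfl, fun i hi => by rw [Nat.mod_eq_of_lt hi]⟩, rfl⟩

theorem exists_hasPeriodOn_of_mem_expSet {u : ℕ → B} {w : List B} {r : ℝ} (h : r ∈ expSet u w) :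
    ∃ i K : ℕ, HasPeriodOn u w.length i K ∧ r = (w.length + K : ℝ) / w.length := by
  obtain ⟨v, ⟨i, hv⟩, ⟨-, hlen, hpow⟩, rfl⟩ := h
  refine ⟨i, v.length - w.length, fun j hj => ?_, by rw [Nat.cast_sub hlen]; ring⟩
  have hshift := hpow (j + w.length) (by omega)
  rw [Nat.add_mod_right, ← hpow j (by omega), hv.getElem?_eq (by omega),
    hv.getElem?_eq (by omega), ← add_assoc] at hshift
  exact Option.some.inj hshift

theorem HasPeriodOn.apply_add_mod {u : ℕ → B} {m i K : ℕ} (h : HasPeriodOn u m i K) {j : ℕ}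
    (hj : j < m + K) : u (i + j % m) = u (i + j) := by
  induction j using Nat.strong_induction_on with
  | _ j ih =>
    rcases lt_or_ge j m with hjm | hjm
    · rw [Nat.mod_eq_of_lt hjm]
    · obtain ⟨t, rfl⟩ := Nat.exists_eq_add_of_le' hjm
      rcases Nat.eq_zero_or_pos m with rfl | hm
      · rw [Nat.mod_zero]
      · rw [Nat.add_mod_right, ih t (by omega) (by omega), ← add_assoc]
        exact (h t (by omega)).symm

theorem HasPeriodOn.exists_mem_expSet {u : ℕ → B} {m i K : ℕ} (h : HasPeriodOn u m i K)
    (hm : 0 < m) :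
    ∃ w, IsFactor u w ∧ w.length = m ∧ (m + K : ℝ) / m ∈ expSet u w := by
  have hw := factorAt_map_range u i m
  have hv := factorAt_map_range u i (m + K)
  refine ⟨_, ⟨i, hw⟩, by simp, _, ⟨i, hv⟩, ⟨?_, by simp, fun j hj => ?_⟩, by simp⟩
  · simpa using hm.ne'
  · rw [hv.getElem?_eq hj]
    simp only [List.length_map, List.length_range] at hj ⊢
    rw [hw.getElem?_eq (by simpa using Nat.mod_lt j hm), h.apply_add_mod hj]

theorem floor_eq_floor_iff_forall_notMem_uIoc {x y : ℝ} :
    ⌊x⌋ = ⌊y⌋ ↔ ∀ k : ℤ, (k : ℝ) ∉ Set.uIoc x y := by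
  have hle_iff : ⌊x⌋ = ⌊y⌋ ↔ ∀ k : ℤ, k ≤ x ↔ k ≤ y := by
    simp only [← Int.le_floor]
    exact ⟨fun h k => by rw [h], fun h => le_antisymm ((h _).1 le_rfl) ((h _).2 le_rfl)⟩
  rw [hle_iff]
  refine forall_congr' fun k => ?_
  rw [Set.mem_uIoc, ← not_le, ← not_le]
  tauto

theorem floor_add_succ_mul_eq {α : ℝ} (hα0 : 0 ≤ α) (hα1 : α ≤ 1) (x₀ : ℝ) (n : ℕ) :
    ⌊x₀ + (n + 1 : ℕ) * (1 - α)⌋ =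
      ⌊x₀ + n * (1 - α)⌋ + if sturmianWord α x₀ n then 0 else 1 := by
  have hfract := Int.floor_add_fract (x₀ + n * (1 - α))
  have hnonneg := Int.fract_nonneg (x₀ + n * (1 - α))
  have hlt_one := Int.fract_lt_one (x₀ + n * (1 - α))
  simp only [sturmianWord, decide_eq_true_eq]
  split_ifs with h <;> rw [Int.floor_eq_iff] <;> push_cast <;> constructor <;> linarith

theorem sturmianWord_add_eq_iff {α : ℝ} (hα0 : 0 ≤ α) (hα1 : α ≤ 1) (x₀ : ℝ) (n m : ℕ) :
    sturmianWord α x₀ (n + m) = sturmianWord α x₀ n ↔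
      ⌊x₀ + (n + 1 + m : ℕ) * (1 - α)⌋ - ⌊x₀ + (n + 1 : ℕ) * (1 - α)⌋ =
        ⌊x₀ + (n + m : ℕ) * (1 - α)⌋ - ⌊x₀ + n * (1 - α)⌋ := by
  rw [Nat.add_right_comm, floor_add_succ_mul_eq hα0 hα1, floor_add_succ_mul_eq hα0 hα1]
  cases sturmianWord α x₀ (n + m) <;> cases sturmianWord α x₀ n <;> simp

theorem forall_lt_succ_eq_iff_exists_forall_le_eq {f : ℕ → B} {K : ℕ} :
    (∀ j < K, f (j + 1) = f j) ↔ ∃ c, ∀ j ≤ K, f j = c := by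
  constructor
  · intro h
    refine ⟨f 0, fun j => ?_⟩
    induction j with
    | zero => exact fun _ => rfl
    | succ j ih => exact fun hj => (h j hj).trans (ih (by omega))
  · rintro ⟨c, hc⟩ j hj
    rw [hc (j + 1) hj, hc j hj.le]

theorem hasPeriodOn_sturmianWord_iff {α : ℝ} (hα0 : 0 ≤ α) (hα1 : α ≤ 1) (x₀ : ℝ) {m i K : ℕ} :
    HasPeriodOn (sturmianWord α x₀) m i K ↔ ∃ G : ℤ, ∀ j ≤ K, ∀ k : ℤ, (k : ℝ) ∉
      Set.uIoc (x₀ + (i + j : ℕ) * (1 - α)) (x₀ + (i + j : ℕ) * (1 - α) + (m * (1 - α) - G)) := by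
  have hfloor (n : ℕ) (G : ℤ) : ⌊x₀ + (n + m : ℕ) * (1 - α)⌋ - ⌊x₀ + n * (1 - α)⌋ = G ↔
      ⌊x₀ + n * (1 - α)⌋ = ⌊x₀ + n * (1 - α) + (m * (1 - α) - G)⌋ := by
    rw [show x₀ + n * (1 - α) + (m * (1 - α) - G) = x₀ + (n + m : ℕ) * (1 - α) - G by
      push_cast; ring, Int.floor_sub_intCast]
    omega
  simp only [← floor_eq_floor_iff_forall_notMem_uIoc, ← hfloor,
    ← forall_lt_succ_eq_iff_exists_forall_le_eq]
  refine forall₂_congr fun j _ => ?_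
  rw [sturmianWord_add_eq_iff hα0 hα1, Nat.add_assoc i j 1]

section SturmianPeriods

variable {α x₀ : ℝ} {P P' : ℤ} {Q Q' : ℕ}

theorem HasPeriodOn.add_two_le (hα0 : 0 ≤ α) (hα1 : α ≤ 1) (h : IsFareyPair (1 - α) P Q P' Q')
    (hle : |Q' * (1 - α) - P'| ≤ |Q * (1 - α) - P|) {m i K : ℕ} (hm : 0 < m) (hmQ : m < Q')
    (hper : HasPeriodOn (sturmianWord α x₀) m i K) : K + 2 ≤ Q + Q' := by
  by_contra! hK
  obtain ⟨G, hG⟩ := (hasPeriodOn_sturmianWord_iff hα0 hα1 x₀).1 hper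
  obtain ⟨n, hn, k, hk⟩ := h.exists_intCast_mem_uIoc hle (x₀ + i * (1 - α))
    (h.abs_le_abs_of_lt hm hmQ G)
  refine hG n (by omega) k ?_
  rwa [show x₀ + (i + n : ℕ) * (1 - α) = x₀ + i * (1 - α) + n * (1 - α) by push_cast; ring]

theorem IsFareyPair.exists_hasPeriodOn (hα0 : 0 ≤ α) (hα1 : α ≤ 1)
    (h : IsFareyPair (1 - α) P Q P' Q')
    (hcross : ∀ y : ℝ, ∃ n : ℕ, ∃ k : ℤ, (k : ℝ) ∈
      Set.uIoc (y + n * (1 - α)) (y + n * (1 - α) + -(Q' * (1 - α) - P')))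
    {K : ℕ} (hK : K + 2 ≤ Q + Q') : ∃ i, HasPeriodOn (sturmianWord α x₀) Q i K := by
  -- The orbit point at `i + (K + 1)` is so close to an integer that the gap lemma keeps the
  -- preceding `K + 1` points away from the integers.
  obtain ⟨i, k, hk⟩ := hcross (x₀ + (K + 1 : ℕ) * (1 - α))
  refine ⟨i, (hasPeriodOn_sturmianWord_iff hα0 hα1 x₀).2 ⟨P, fun j hj l hl => ?_⟩⟩
  have hgap := h.notMem_uIoo (m := K + 1 - j) (by omega) (by omega) (k - l)
  rw [Nat.cast_sub (by omega)] at hgap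
  rw [Set.mem_uIoc] at hk hl
  push_cast at hgap hk hl
  rcases h.pos_neg_or_neg_pos with ⟨hQ, hQ'⟩ | ⟨hQ, hQ'⟩
  · rw [Set.uIoo_of_gt (hQ'.trans hQ)] at hgap
    obtain ⟨hk₁, hk₂⟩ := hk.resolve_right fun hk => by linarith
    obtain ⟨hl₁, hl₂⟩ := hl.resolve_right fun hl => by linarith
    exact hgap ⟨by linarith, by linarith⟩
  · rw [Set.uIoo_of_lt (hQ.trans hQ')] at hgap
    obtain ⟨hk₁, hk₂⟩ := hk.resolve_left fun hk => by linarith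
    obtain ⟨hl₁, hl₂⟩ := hl.resolve_left fun hl => by linarith
    exact hgap ⟨by linarith, by linarith⟩

end SturmianPeriods

/-- `p n / q n` are the convergents of the continued fraction `α = [0, a 1, a 2, …]`, the fraction
`p 0 / q 0 = 0 / 1` being the integer part. -/
structure IsConvergents (α : ℝ) (a p q : ℕ → ℕ) : Prop where
  one_le (n : ℕ) : 1 ≤ a (n + 1)
  p_zero : p 0 = 0
  p_one : p 1 = 1
  p_add_two (n : ℕ) : p (n + 2) = a (n + 2) * p (n + 1) + p n
  q_zero : q 0 = 1
  q_one : q 1 = a 1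
  q_add_two (n : ℕ) : q (n + 2) = a (n + 2) * q (n + 1) + q n
  tendsto : Tendsto (fun n => (p n : ℝ) / q n) atTop (𝓝 α)

/-- The exponent `(m + K) / m` of a repetition whose period is `m = q N` and whose excess over one
period is `K = q N + q (N + 1) - 2`. -/
noncomputable def convergentExponent (q : ℕ → ℕ) (N : ℕ) : ℝ :=
  (q N + (q N + q (N + 1) - 2)) / q N

/-- The error `q n α - p n`, with the sign that makes it positive for the convergents of `α`. -/
noncomputable def convergentError (α : ℝ) (p q : ℕ → ℕ) (n : ℕ) : ℝ := (-1) ^ n * (q n * α - p n)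

theorem abs_convergentError (α : ℝ) (p q : ℕ → ℕ) (n : ℕ) :
    |convergentError α p q n| = |q n * α - p n| := by
  rw [convergentError, abs_mul, abs_neg_one_pow, one_mul]

namespace IsConvergents

variable {α : ℝ} {a p q : ℕ → ℕ}

theorem q_pos (h : IsConvergents α a p q) (n : ℕ) : 0 < q n := by
  induction n using Nat.twoStepInduction with
  | zero => rw [h.q_zero]; exact one_pos
  | one => rw [h.q_one]; exact h.one_le 0
  | more n ih _ => rw [h.q_add_two]; omega

theorem q_add_le (h : IsConvergents α a p q) (n : ℕ) : q (n + 1) + q n ≤ q (n + 2) := by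
  rw [h.q_add_two]
  gcongr
  exact Nat.le_mul_of_pos_left _ (h.one_le (n + 1))

theorem le_q (h : IsConvergents α a p q) (n : ℕ) : n ≤ q n := by
  induction n using Nat.twoStepInduction with
  | zero => exact Nat.zero_le _
  | one => exact h.q_pos 1
  | more n _ ih =>
    have := h.q_add_le n
    have := h.q_pos n
    omega

theorem exists_q_le_lt (h : IsConvergents α a p q) {m : ℕ} (hm : 0 < m) :
    ∃ N, q N ≤ m ∧ m < q (N + 1) := by
  have hex : ∃ n, m < q n := ⟨m + 1, h.le_q (m + 1)⟩
  obtain ⟨N, hN⟩ : ∃ N, Nat.find hex = N + 1 := Nat.exists_eq_succ_of_ne_zero fun h0 => by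
    have := Nat.find_spec hex
    rw [h0, h.q_zero] at this
    omega
  exact ⟨N, not_lt.1 (Nat.find_min hex (by omega)), hN ▸ Nat.find_spec hex⟩

theorem det_eq (h : IsConvergents α a p q) (n : ℕ) :
    (p (n + 1) * q n - p n * q (n + 1) : ℤ) = (-1) ^ n := by
  induction n with
  | zero => simp [h.p_zero, h.p_one, h.q_zero]
  | succ n ih =>
    rw [h.q_add_two, h.p_add_two, pow_succ, ← ih]
    push_cast
    ring

theorem neg_one_pow_mul_det_nonneg (h : IsConvergents α a p q) (n k : ℕ) :
    (0 : ℤ) ≤ (-1) ^ n * (q n * p (n + k) - p n * q (n + k)) := by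
  -- As a function of `k`, this satisfies the recurrence of the convergents with initial values
  -- `0` and `1`.
  induction k using Nat.twoStepInduction with
  | zero => rw [add_zero, mul_comm (q n : ℤ), sub_self, mul_zero]
  | one => rw [mul_comm (q n : ℤ), h.det_eq, ← mul_pow]; simp
  | more k ih₀ ih₁ =>
    have hrec : ((-1) ^ n * (q n * p (n + (k + 2)) - p n * q (n + (k + 2))) : ℤ) =
        a (n + k + 2) * ((-1) ^ n * (q n * p (n + (k + 1)) - p n * q (n + (k + 1)))) +
          (-1) ^ n * (q n * p (n + k) - p n * q (n + k)) := by
      rw [← add_assoc n k 2, ← add_assoc n k 1, h.q_add_two, h.p_add_two]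
      push_cast
      ring
    rw [hrec]
    positivity

theorem convergentError_nonneg (h : IsConvergents α a p q) (n : ℕ) :
    0 ≤ convergentError α p q n := by
  have hlim : Tendsto (fun k => (-1 : ℝ) ^ n * (q n * ((p (k + n) : ℝ) / q (k + n)) - p n)) atTop
      (𝓝 (convergentError α p q n)) :=
    ((((tendsto_add_atTop_iff_nat n).2 h.tendsto).const_mul _).sub_const _).const_mul _
  refine ge_of_tendsto' hlim fun k => ?_
  have hq : (0 : ℝ) < q (k + n) := by exact_mod_cast h.q_pos _
  have hdet : (0 : ℝ) ≤ (-1) ^ n * (q n * p (k + n) - p n * q (k + n)) := by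
    rw [add_comm k n]
    exact_mod_cast h.neg_one_pow_mul_det_nonneg n k
  convert div_nonneg hdet hq.le using 1
  field_simp

theorem convergentError_eq (h : IsConvergents α a p q) (n : ℕ) :
    convergentError α p q n =
      a (n + 2) * convergentError α p q (n + 1) + convergentError α p q (n + 2) := by
  simp only [convergentError, h.q_add_two, h.p_add_two]
  push_cast
  ring

theorem antitone_convergentError (h : IsConvergents α a p q) :
    Antitone (convergentError α p q) := by
  refine antitone_nat_of_succ_le fun n => ?_
  have ha : (1 : ℝ) ≤ a (n + 2) := by exact_mod_cast h.one_le (n + 1)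
  rw [h.convergentError_eq n]
  nlinarith [h.convergentError_nonneg (n + 1), h.convergentError_nonneg (n + 2)]

theorem convergentError_pos (h : IsConvergents α a p q) (n : ℕ) : 0 < convergentError α p q n := by
  refine (h.convergentError_nonneg n).lt_of_ne' fun h0 => ?_
  have h1 : convergentError α p q (n + 1) = 0 :=
    ((h.antitone_convergentError n.le_succ).trans h0.le).antisymm (h.convergentError_nonneg _)
  have hdet : (p (n + 1) * q n - p n * q (n + 1) : ℝ) = (-1) ^ n := by exact_mod_cast h.det_eq n
  have hsum : q (n + 1) * convergentError α p q n + q n * convergentError α p q (n + 1) = 1 := by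
    calc _ = (-1) ^ n * (p (n + 1) * q n - p n * q (n + 1) : ℝ) := by
          simp only [convergentError]; ring
      _ = 1 := by rw [hdet, ← mul_pow]; simp
  rw [h0, h1] at hsum
  simp at hsum

theorem pos (h : IsConvergents α a p q) : 0 < α := by
  simpa [convergentError, h.p_zero, h.q_zero] using h.convergentError_pos 0

theorem lt_one (h : IsConvergents α a p q) : α < 1 := by
  have herr := h.convergentError_pos 1
  have ha : (1 : ℝ) ≤ a 1 := by exact_mod_cast h.one_le 0
  simp only [convergentError, h.p_one, h.q_one, pow_one, Nat.cast_one] at herr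
  nlinarith [h.pos]

theorem isFareyPair (h : IsConvergents α a p q) (n : ℕ) :
    IsFareyPair α (p n) (q n) (p (n + 1)) (q (n + 1)) where
  det := by rw [h.det_eq, abs_neg_one_pow]
  straddle := by
    have hprod := mul_pos (h.convergentError_pos n) (h.convergentError_pos (n + 1))
    have hsign : ((-1) ^ n * (-1) ^ n : ℝ) = 1 := by rw [← mul_pow]; simp
    simp only [convergentError, pow_succ] at hprod
    push_cast
    linear_combination hprod - (q n * α - p n) * (q (n + 1) * α - p (n + 1)) * hsign

theorem isFareyPair_one_sub (h : IsConvergents α a p q) (n : ℕ) :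
    IsFareyPair (1 - α) (q n - p n) (q n) (q (n + 1) - p (n + 1)) (q (n + 1)) :=
  (h.isFareyPair n).one_sub

theorem antitone_abs_error_one_sub (h : IsConvergents α a p q) :
    Antitone fun n => |q n * (1 - α) - (q n - p n : ℤ)| := by
  have habs (n : ℕ) : |q n * (1 - α) - (q n - p n : ℤ)| = convergentError α p q n := by
    rw [← abs_of_pos (h.convergentError_pos n), abs_convergentError, ← abs_neg]
    push_cast
    ring_nf
  simpa only [habs] using h.antitone_convergentError

theorem le_convergentExponent (h : IsConvergents α a p q) {x₀ r : ℝ} {w : List Bool} {N : ℕ}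
    (hN : q N ≤ w.length) (hN' : w.length < q (N + 1))
    (hr : r ∈ expSet (sturmianWord α x₀) w) : r ≤ convergentExponent q N := by
  obtain ⟨i, K, hper, rfl⟩ := exists_hasPeriodOn_of_mem_expSet hr
  have hqN := h.q_pos N
  have hK : (K : ℝ) + 2 ≤ q N + q (N + 1) := by
    exact_mod_cast hper.add_two_le h.pos.le h.lt_one.le (h.isFareyPair_one_sub N)
      (h.antitone_abs_error_one_sub N.le_succ) (hqN.trans_le hN) hN'
  have hqN' : (0 : ℝ) < q N := by exact_mod_cast hqN
  have hNle : (q N : ℝ) ≤ w.length := by exact_mod_cast hN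
  calc (w.length + K : ℝ) / w.length = 1 + K / w.length := by
        rw [add_div, div_self (hqN'.trans_le hNle).ne']
    _ ≤ 1 + K / q N := by gcongr
    _ ≤ 1 + (q N + q (N + 1) - 2) / q N := by gcongr; linarith
    _ = convergentExponent q N := by
        rw [convergentExponent, add_div _ _ (q N : ℝ), div_self hqN'.ne']

theorem exists_forall_le_convergentExponent (h : IsConvergents α a p q) (x₀ : ℝ) {w : List Bool}
    (hw : w ≠ []) : ∃ N, ∀ r ∈ expSet (sturmianWord α x₀) w, r ≤ convergentExponent q N := by
  obtain ⟨N, hN, hN'⟩ := h.exists_q_le_lt (List.length_pos_iff.2 hw)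
  exact ⟨N, fun r => h.le_convergentExponent hN hN'⟩

theorem exists_convergentExponent_mem_expSet (h : IsConvergents α a p q) (x₀ : ℝ) (N : ℕ) :
    ∃ w, IsFactor (sturmianWord α x₀) w ∧ w ≠ [] ∧
      convergentExponent q N ∈ expSet (sturmianWord α x₀) w := by
  have hqN := h.q_pos N
  have hqN' := h.q_pos (N + 1)
  have hcross (y : ℝ) := (h.isFareyPair_one_sub (N + 1)).exists_intCast_mem_uIoc
    (h.antitone_abs_error_one_sub (N + 1).le_succ) y (abs_neg _).ge
  obtain ⟨i, hi⟩ := (h.isFareyPair_one_sub N).exists_hasPeriodOn (x₀ := x₀) h.pos.le h.lt_one.le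
    (fun y => (hcross y).imp fun _ => And.right) (K := q N + q (N + 1) - 2) (by omega)
  obtain ⟨w, hw, hlen, hmem⟩ := hi.exists_mem_expSet hqN
  refine ⟨w, hw, List.length_pos_iff.1 (hlen ▸ hqN), ?_⟩
  convert hmem using 1
  rw [convergentExponent, Nat.cast_sub (by omega)]
  push_cast
  ring

theorem convergentExponent_eq (h : IsConvergents α a p q) {N : ℕ} (hN : 1 ≤ N) :
    convergentExponent q N = 2 + (a (N + 1) : ℝ) + ((q (N - 1) : ℝ) - 2) / (q N : ℝ) := by
  obtain ⟨n, rfl⟩ := Nat.exists_eq_add_of_le' hN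
  have hq : (q (n + 1) : ℝ) ≠ 0 := by exact_mod_cast (h.q_pos (n + 1)).ne'
  rw [convergentExponent, h.q_add_two, Nat.add_sub_cancel]
  push_cast
  field_simp
  ring

theorem convergentExponent_zero_le_one (h : IsConvergents α a p q) (ha : a 1 = 1) :
    convergentExponent q 0 ≤ convergentExponent q 1 := by
  have hq₂ : (1 : ℝ) ≤ q 2 := by exact_mod_cast h.q_pos 2
  simp only [convergentExponent, zero_add, Nat.reduceAdd, h.q_zero, h.q_one, ha]
  norm_num
  linarith

theorem iSup_convergentExponent_eq (h : IsConvergents α a p q) (ha : a 1 = 1) :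
    ⨆ N, (convergentExponent q N : EReal) = sSup ((fun N : ℕ =>
      ((2 + (a (N + 1) : ℝ) + ((q (N - 1) : ℝ) - 2) / (q N : ℝ) : ℝ) : EReal)) '' {N | 1 ≤ N}) := by
  rw [Set.image_congr (s := {N | 1 ≤ N}) (g := fun N => (convergentExponent q N : EReal))
    fun N hN => congrArg Real.toEReal (h.convergentExponent_eq hN).symm]
  refine le_antisymm (iSup_le fun N => ?_)
    (sSup_le (Set.forall_mem_image.2 fun N _ => le_iSup_of_le N le_rfl))
  rcases N.eq_zero_or_pos with rfl | hN
  · exact (EReal.coe_le_coe_iff.2 (h.convergentExponent_zero_le_one ha)).trans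
      (le_sSup ⟨1, le_refl (1 : ℕ), rfl⟩)
  · exact le_sSup (Set.mem_image_of_mem _ hN)

end IsConvergents

theorem index_formula_general {α : ℝ} {a p q : ℕ → ℕ} (h : IsConvergents α a p q) (x₀ : ℝ) :
    sSup ((fun w : List Bool => ((index (sturmianWord α x₀) w : ℝ) : EReal)) ''
      {w | IsFactor (sturmianWord α x₀) w ∧ w ≠ []}) = ⨆ N, (convergentExponent q N : EReal) := by
  refine le_antisymm (sSup_le (Set.forall_mem_image.2 ?_)) (iSup_le fun N => ?_)
  · rintro w ⟨hw, hne⟩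
    obtain ⟨N, hN⟩ := h.exists_forall_le_convergentExponent x₀ hne
    exact le_iSup_of_le N (EReal.coe_le_coe_iff.2 (csSup_le (expSet_nonempty hw hne) hN))
  · obtain ⟨w, hw, hne, hmem⟩ := h.exists_convergentExponent_mem_expSet x₀ N
    obtain ⟨N', hN'⟩ := h.exists_forall_le_convergentExponent x₀ hne
    exact (EReal.coe_le_coe_iff.2 (le_csSup ⟨_, hN'⟩ hmem)).trans
      (le_sSup (Set.mem_image_of_mem _ ⟨hw, hne⟩))

/-- Carpi–de Luca / Damanik–Lenz: the index of a Sturmian word of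
slope `α = [0,1,a₂,a₃,…]` equals `sup_{N≥1} (2 + a_{N+1} + (q_{N−1} − 2)/q_N)`
(suprema taken in `EReal`, as both sides may be infinite). -/
theorem index_formula (α x₀ : ℝ) (hirr : Irrational α)
    (hα : 1/2 < α) (hα1 : α < 1) (hx0 : 0 ≤ x₀) (hx1 : x₀ < 1)
    (a p q : ℕ → ℕ) (ha1 : a 1 = 1) (hapos : ∀ n, 1 ≤ n → 1 ≤ a n)
    (hq0 : q 0 = 1) (hq1 : q 1 = 1)
    (hqrec : ∀ N, q (N + 2) = a (N + 2) * q (N + 1) + q N)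
    (hp0 : p 0 = 0) (hp1 : p 1 = 1)
    (hprec : ∀ N, p (N + 2) = a (N + 2) * p (N + 1) + p N)
    (hcf : Tendsto (fun N => (p N : ℝ) / (q N : ℝ)) atTop (nhds α)) :
    sSup ((fun w : List Bool => ((index (sturmianWord α x₀) w : ℝ) : EReal)) ''
        {w | IsFactor (sturmianWord α x₀) w ∧ w ≠ []}) =
    sSup ((fun N : ℕ =>
        ((2 + (a (N + 1) : ℝ) + ((q (N - 1) : ℝ) - 2) / (q N : ℝ) : ℝ) : EReal)) ''
        {N | 1 ≤ N}) := by
  have h : IsConvergents α a p q :=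
    ⟨fun n => hapos (n + 1) n.succ_pos, hp0, hp1, hprec, hq0, hq1.trans ha1.symm, hqrec, hcf⟩
  rw [index_formula_general h, h.iSup_convergentExponent_eq ha1]

end SturmianPaper
end
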